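/- Let φ(x,y) = a₁x² + a₂xy + a₃y² be a non-degenerate rational quadratic form (a₁,a₂,a₃ ∈ ℚ, a₂² − 4a₁a₃ ≠ 0), let 0 < s < 1 and C ≥ 1. There exist constants ε = ε(φ, s) > 0, δ₀ = δ₀(φ, s, C) > 0, K = K(φ, s) > 0 and an exponent e = e(s) > 0 such that the following holds for all 0 < δ ≤ δ₀. Let A ⊂ [0,1] be any δ-separated set of cardinality ⌈δ^{-s}⌉ such that #(A ∩ I) ≤ C·l^s·(#A) for every interval I of length l ≥ δ. Then for every G ⊆ A × A such that #{y : (x,y) ∈ G} ≥ δ^{ε}(#A) for every x ∈ A and #{x : (x,y) ∈ G} ≥ δ^{ε}(#A) for every y ∈ A, one has E_δ(A +_G A) + E_δ(φ_G(A,A)) ≥ K·C^{-e}·δ^{-ε}·(#A). -/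

import Mathlib

open MeasureTheory Real
open scoped Classical

/-- `E_δ(A)`: the δ-covering number of `A ⊆ ℝ`, the minimal number of sets of
diameter at most `δ` needed to cover `A`. -/
noncomputable def coverNum (δ : ℝ) (A : Set ℝ) : ℕ :=
  sInf {m : ℕ | ∃ F : Finset (Set ℝ), F.card = m ∧
    (∀ U ∈ F, EMetric.diam U ≤ ENNReal.ofReal δ) ∧ A ⊆ ⋃ U ∈ F, U}

/-!
Rescale by `δ⁻¹ = N` and round to integers; suppose both covering numbers are at most `K * #A`, with
`K` a small power of `N`. By Balog–Szemerédi–Gowers the graph has a dense piece whose sides have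
small iterated sums and differences. On this piece the form `φ` takes few values at scale `N`, so it
has many collisions. Since `φ(x, y) - φ(x', y')` is linear in `(x + x', y + y')` for a given
difference, the collisions yield `p₀` and a large set `R` such that each sum of dilates
`p₀ R + r R` with `r ∈ R` meets few intervals of length `N`.

Consider the slopes `(a - b) / (c - d)` with `a, b, c, d ∈ R`. If some dyadic child `l / 2` or
`(l + 1) / 2` of a slope `l` is far from all slopes, then a form `p₀ z + 2 (c - d) x + …` built from
it is injective on separated triples of `R`, so it takes about `N ^ (3 * s)` values at scale `N`;
but it has values in a sum of dilates, of size about `N ^ s`. Otherwise the slopes are dense in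
`[0, 1]`. Each slope `l` then comes with many pairs of points of `R × R` whose difference is close
to the line `x + l y = 0`, and separated slopes have almost disjoint sets of such pairs, so dense
slopes would need more pairs than `R × R` has.
-/

namespace DiscretizedSumProduct

open Finset
open scoped Pointwise

section Counting

variable {α β : Type*}

lemma card_mul_le_card_of_le_card_fiber [DecidableEq β] {s : Finset α} {t : Finset β} {f : α → β}
    {c : ℝ} (h : ∀ b ∈ t, c ≤ #{a ∈ s | f a = b}) : #t * c ≤ #s := by
  have hle := card_nsmul_le_card_nsmul (R := ℝ) (fun b a => f a = b) (n := 1) h fun a _ => by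
    refine mod_cast card_le_one.2 fun b hb b' hb' => ?_
    rw [← (mem_filter.1 hb).2, ← (mem_filter.1 hb').2]
  simpa only [nsmul_eq_mul, mul_one] using hle

lemma card_le_mul_card_of_card_fiber_le [DecidableEq β] {s : Finset α} {t : Finset β} {f : α → β}
    {c : ℝ} (hf : ∀ a ∈ s, f a ∈ t) (h : ∀ b ∈ t, #{a ∈ s | f a = b} ≤ c) : #s ≤ c * #t := by
  have hsum := sum_le_card_nsmul t (fun b => (#{a ∈ s | f a = b} : ℝ)) c h
  rw [nsmul_eq_mul, mul_comm] at hsum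
  exact (by exact_mod_cast (card_eq_sum_card_fiberwise hf).le : (#s : ℝ) ≤ _).trans hsum

lemma card_filter_product_eq_sum_card (s : Finset α) (t : Finset β) (r : α → β → Prop)
    [∀ a b, Decidable (r a b)] : #{p ∈ s ×ˢ t | r p.1 p.2} = ∑ a ∈ s, #{b ∈ t | r a b} := by
  simp only [card_filter, sum_product]

lemma sq_card_le_card_image_mul_card_collisions [DecidableEq β] (s : Finset α) (f : α → β) :
    #s ^ 2 ≤ #(s.image f) * #{p ∈ s ×ˢ s | f p.1 = f p.2} := by
  have hcollisions : #{p ∈ s ×ˢ s | f p.1 = f p.2} = ∑ b ∈ s.image f, #{a ∈ s | f a = b} ^ 2 := by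
    rw [card_filter_product_eq_sum_card s s (fun a a' => f a = f a'),
      ← sum_fiberwise_of_maps_to (fun a ha => mem_image_of_mem f ha)]
    refine sum_congr rfl fun b _ => ?_
    calc ∑ a ∈ s with f a = b, #{a' ∈ s | f a = f a'}
        = ∑ a ∈ s with f a = b, #{a' ∈ s | f a' = b} :=
          sum_congr rfl fun a ha => by simp only [(mem_filter.1 ha).2, eq_comm]
      _ = #{a ∈ s | f a = b} ^ 2 := by rw [sum_const, smul_eq_mul, sq]
  rw [hcollisions, card_eq_sum_card_image f s]
  exact sq_sum_le_card_mul_sum_sq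

lemma exists_le_mul_of_le_sum {ι : Type*} {s : Finset ι} {f : ι → ℝ} {T h : ℝ} (hT₀ : 0 < T)
    (hs : #s ≤ h) (hT : T ≤ ∑ i ∈ s, f i) : ∃ i ∈ s, T ≤ h * f i := by
  by_contra! hlt
  have hne : s.Nonempty := nonempty_of_ne_empty fun h₀ => by
    rw [h₀, sum_empty] at hT
    linarith
  have hh : 0 ≤ h := (Nat.cast_nonneg _).trans hs
  have hsum := sum_lt_sum_of_nonempty hne hlt
  rw [← mul_sum, sum_const, nsmul_eq_mul] at hsum
  exact hsum.not_ge (mul_le_mul hs hT hT₀.le hh)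

lemma le_two_mul_sum_filter_of_le_sum {s : Finset α} {f : α → ℝ} {h T : ℝ} (hT₀ : 0 ≤ T)
    (hs : #s ≤ h) (hT : T ≤ ∑ i ∈ s, f i) :
    T ≤ 2 * ∑ i ∈ s with T ≤ 2 * h * f i, f i := by
  rcases s.eq_empty_or_nonempty with rfl | hne
  · simpa using hT
  have hh : 0 < h := lt_of_lt_of_le (mod_cast hne.card_pos) hs
  have hrare : 2 * h * ∑ i ∈ s with ¬ T ≤ 2 * h * f i, f i ≤ h * T := by
    rw [mul_sum]
    calc _ ≤ #{i ∈ s | ¬ T ≤ 2 * h * f i} • T :=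
          sum_le_card_nsmul _ _ _ fun i hi => (not_le.1 (mem_filter.1 hi).2).le
      _ ≤ h * T := by
          rw [nsmul_eq_mul]
          exact mul_le_mul_of_nonneg_right ((Nat.cast_le.2 (card_filter_le _ _)).trans hs) hT₀
  have hsplit := sum_filter_add_sum_filter_not s (fun i => T ≤ 2 * h * f i) f
  have hrare' : 2 * ∑ i ∈ s with ¬ T ≤ 2 * h * f i, f i ≤ T :=
    le_of_mul_le_mul_left (by linarith) hh
  linarith

end Counting

section BalogSzemerediGowers

variable {α β : Type*}

lemma exists_subset_forall_card_le_two_mul_common {N : Finset α} {bad : α → α → Prop}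
    [∀ a c, Decidable (bad a c)] (h : 16 * #{p ∈ N ×ˢ N | bad p.1 p.2} ≤ #N ^ 2) :
    ∃ A ⊆ N, #N ≤ 2 * #A ∧ ∀ a ∈ A, ∀ a' ∈ A, #N ≤ 2 * #{c ∈ N | ¬ bad a c ∧ ¬ bad a' c} := by
  have hsplit := card_filter_add_card_filter_not (s := N) (fun a => 4 * #{c ∈ N | bad a c} ≤ #N)
  refine ⟨{a ∈ N | 4 * #{c ∈ N | bad a c} ≤ #N}, filter_subset _ _, ?_, fun a ha a' ha' => ?_⟩
  · have hfew : #{a ∈ N | ¬ 4 * #{c ∈ N | bad a c} ≤ #N} * #N ≤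
        4 * ∑ a ∈ N, #{c ∈ N | bad a c} := by
      rw [mul_sum, ← smul_eq_mul]
      exact (card_nsmul_le_sum _ _ _ fun a ha => (not_le.1 (mem_filter.1 ha).2).le).trans
        (sum_le_sum_of_subset (filter_subset _ _))
    rw [card_filter_product_eq_sum_card N N bad] at h
    nlinarith
  · have hcover := card_le_card (show N ⊆ {c ∈ N | ¬ bad a c ∧ ¬ bad a' c} ∪
        ({c ∈ N | bad a c} ∪ {c ∈ N | bad a' c}) from fun c hc => by
      simp only [mem_union, mem_filter]; tauto)
    have hunion := (card_union_le {c ∈ N | ¬ bad a c ∧ ¬ bad a' c}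
      ({c ∈ N | bad a c} ∪ {c ∈ N | bad a' c})).trans
        (Nat.add_le_add_left (card_union_le _ _) _)
    have ha := (mem_filter.1 ha).2
    have ha' := (mem_filter.1 ha').2
    omega

lemma exists_mul_card_filter_le_card {P : Finset α} {B : Finset β} (hB : B.Nonempty)
    {r : α → β → Prop} [∀ p b, Decidable (r p b)] {c : ℝ} (h : ∀ p ∈ P, c * #{b ∈ B | r p b} ≤ #B) :
    ∃ b ∈ B, c * #{p ∈ P | r p b} ≤ #P := by
  apply exists_le_of_sum_le hB
  have hswap : ∑ b ∈ B, (#{p ∈ P | r p b} : ℝ) = ∑ p ∈ P, (#{b ∈ B | r p b} : ℝ) :=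
    mod_cast sum_card_bipartiteAbove_eq_sum_card_bipartiteBelow fun b p => r p b
  calc ∑ b ∈ B, c * (#{p ∈ P | r p b} : ℝ)
      = ∑ p ∈ P, c * (#{b ∈ B | r p b} : ℝ) := by rw [← mul_sum, hswap, mul_sum]
    _ ≤ #P * #B := by
      rw [← nsmul_eq_mul]
      exact sum_le_card_nsmul _ _ _ h
    _ = ∑ _b ∈ B, (#P : ℝ) := by rw [sum_const, nsmul_eq_mul, mul_comm]

/-- The number of common neighbours in `B` of the vertices `a` and `c` of the bipartite graph
`r`. -/
def codegree (r : α → β → Prop) [∀ a b, Decidable (r a b)] (B : Finset β) (a c : α) : ℕ :=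
  #{b ∈ B | r a b ∧ r c b}

lemma exists_subset_forall_card_le_mul_large_codegree {A : Finset α} {B : Finset β}
    {r : α → β → Prop} [∀ a b, Decidable (r a b)] {K : ℝ} (hK : 0 < K) (hB : B.Nonempty)
    (hr : ∀ b ∈ B, #A ≤ K * #{a ∈ A | r a b}) :
    ∃ A' ⊆ A, #A ≤ 2 * K * #A' ∧ ∀ a ∈ A', ∀ a' ∈ A', ∃ D ⊆ A, #A ≤ 2 * K * #D ∧
      ∀ c ∈ D, #B ≤ 16 * K ^ 2 * codegree r B a c ∧ #B ≤ 16 * K ^ 2 * codegree r B a' c := by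
  set bad : α → α → Prop := fun a c => 16 * K ^ 2 * codegree r B a c < #B with hbad
  obtain ⟨b, hb, hPb⟩ := exists_mul_card_filter_le_card (P := {p ∈ A ×ˢ A | bad p.1 p.2})
    (c := 16 * K ^ 2) hB (r := fun p b => r p.1 b ∧ r p.2 b) fun p hp => (mem_filter.1 hp).2.le
  set N := {a ∈ A | r a b} with hN
  have hAN : #A ≤ K * #N := hr b hb
  have hbadN : 16 * #{p ∈ N ×ˢ N | bad p.1 p.2} ≤ #N ^ 2 := by
    suffices K ^ 2 * (16 * #{p ∈ N ×ˢ N | bad p.1 p.2}) ≤ K ^ 2 * (#N : ℝ) ^ 2 by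
      exact_mod_cast le_of_mul_le_mul_left this (by positivity)
    calc K ^ 2 * (16 * #{p ∈ N ×ˢ N | bad p.1 p.2})
        = 16 * K ^ 2 * (#{p ∈ N ×ˢ N | bad p.1 p.2} : ℝ) := by ring
      _ ≤ 16 * K ^ 2 * #{p ∈ {p ∈ A ×ˢ A | bad p.1 p.2} | r p.1 b ∧ r p.2 b} := by
        gcongr
        intro p
        simp only [hN, mem_filter, mem_product]
        tauto
      _ ≤ #{p ∈ A ×ˢ A | bad p.1 p.2} := hPb
      _ ≤ (#A : ℝ) ^ 2 :=
        mod_cast (card_filter_le _ _).trans_eq (by rw [card_product, sq])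
      _ ≤ (K * #N) ^ 2 := by gcongr
      _ = K ^ 2 * #N ^ 2 := mul_pow _ _ _
  have hhalf {n m : ℕ} (h : n ≤ 2 * m) : K * n ≤ 2 * K * m := by
    have : (n : ℝ) ≤ 2 * m := mod_cast h
    nlinarith
  obtain ⟨A', hA'N, hA', hcommon⟩ := exists_subset_forall_card_le_two_mul_common (bad := bad) hbadN
  refine ⟨A', hA'N.trans (filter_subset _ _), hAN.trans (hhalf hA'), fun a ha a' ha' =>
    ⟨{c ∈ N | ¬ bad a c ∧ ¬ bad a' c}, (filter_subset _ _).trans (filter_subset _ _),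
      hAN.trans (hhalf (hcommon a ha a' ha')), fun c hc => ?_⟩⟩
  simpa only [hbad, not_lt] using (mem_filter.1 hc).2

lemma exists_subset_forall_card_le_mul_card_column {A : Finset α} {B : Finset β} {r : α → β → Prop}
    [∀ a b, Decidable (r a b)] {K : ℝ} (hK : 0 < K)
    (hr : ∀ a ∈ A, #B ≤ K * #{b ∈ B | r a b}) :
    ∃ B' ⊆ B, (∀ b ∈ B', #A ≤ 2 * K * #{a ∈ A | r a b}) ∧
      #A * #B ≤ 2 * K * #{p ∈ A ×ˢ B' | r p.1 p.2} := by
  have htotal : (#A * #B / K : ℝ) ≤ ∑ b ∈ B, (#{a ∈ A | r a b} : ℝ) := by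
    have hrows := card_nsmul_le_sum A (fun a => (#{b ∈ B | r a b} : ℝ)) (#B / K)
      fun a ha => (div_le_iff₀' hK).2 (hr a ha)
    rw [nsmul_eq_mul, ← mul_div_assoc] at hrows
    exact hrows.trans_eq (mod_cast sum_card_bipartiteAbove_eq_sum_card_bipartiteBelow r)
  have hpopular := le_two_mul_sum_filter_of_le_sum (by positivity) le_rfl htotal
  refine ⟨{b ∈ B | #A * #B / K ≤ 2 * #B * #{a ∈ A | r a b}}, filter_subset _ _,
    fun b hb => ?_, ?_⟩
  · obtain ⟨hbB, hb⟩ := mem_filter.1 hb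
    have hB : (0 : ℝ) < #B := mod_cast card_pos.2 ⟨b, hbB⟩
    rw [div_le_iff₀ hK] at hb
    exact le_of_mul_le_mul_right (by linarith) hB
  · rw [div_le_iff₀ hK] at hpopular
    set B' := {b ∈ B | #A * #B / K ≤ 2 * #B * #{a ∈ A | r a b}}
    have hswap : (#{p ∈ A ×ˢ B' | r p.1 p.2} : ℝ) = ∑ b ∈ B', (#{a ∈ A | r a b} : ℝ) := by
      rw [card_filter_product_eq_sum_card]
      exact_mod_cast sum_card_bipartiteAbove_eq_sum_card_bipartiteBelow r
    rw [hswap, mul_right_comm]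
    exact hpopular

end BalogSzemerediGowers

section PartialSums

variable {α : Type*} [AddCommGroup α] [DecidableEq α]

/-- The sumset `A +_G B` along a graph `G ⊆ A × B`. -/
def graphSum (G : Finset (α × α)) : Finset α := G.image fun p => p.1 + p.2

lemma add_mem_graphSum {G : Finset (α × α)} {x y : α} (h : (x, y) ∈ G) : x + y ∈ graphSum G :=
  mem_image_of_mem (fun p : α × α => p.1 + p.2) h

/-- A path `a - b - c - b' - a'` in `G` represents `a - a'` through four sums along `G`. -/
lemma sum_codegree_mul_codegree_le_card (G : Finset (α × α)) (B D : Finset α) (a a' : α) :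
    ∑ c ∈ D, codegree (fun x y => (x, y) ∈ G) B a c * codegree (fun x y => (x, y) ∈ G) B a' c ≤
      #{v ∈ (graphSum G ×ˢ graphSum G) ×ˢ (graphSum G ×ˢ graphSum G) |
        v.1.1 - v.1.2 + (v.2.1 - v.2.2) = a - a'} := by
  simp only [codegree, ← card_product, ← card_sigma]
  apply card_le_card_of_injOn
    fun t => ((a + t.2.1, t.1 + t.2.1), (t.1 + t.2.2, a' + t.2.2))
  · rintro ⟨c, b, b'⟩ ht
    simp only [coe_sigma, coe_product, Set.mem_sigma_iff, Set.mem_prod, mem_coe, mem_filter] at ht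
    obtain ⟨_, ⟨_, hab, hcb⟩, _, hab', hcb'⟩ := ht
    simp only [coe_filter, Set.mem_ofPred_eq, mem_product]
    exact ⟨⟨⟨add_mem_graphSum hab, add_mem_graphSum hcb⟩, add_mem_graphSum hcb',
      add_mem_graphSum hab'⟩, by abel⟩
  · rintro ⟨c, b, b'⟩ _ ⟨c', d, d'⟩ _ h
    simp only [Prod.mk.injEq, add_right_inj] at h
    obtain ⟨⟨rfl, hc⟩, -, rfl⟩ := h
    rw [add_right_cancel hc]

/-- The Balog–Szemerédi–Gowers theorem. -/
theorem exists_subset_card_sub_mul_le_card_graphSum {A B : Finset α} {G : Finset (α × α)} {K : ℝ}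
    (hK : 0 < K) (hB : B.Nonempty) (hG : ∀ y ∈ B, #A ≤ K * #{x ∈ A | (x, y) ∈ G}) :
    ∃ A' ⊆ A, #A ≤ 2 * K * #A' ∧
      #(A' - A') * (#A * #B ^ 2) ≤ 512 * K ^ 5 * (#(graphSum G) : ℝ) ^ 4 := by
  obtain ⟨A', hA'A, hA', hcommon⟩ := exists_subset_forall_card_le_mul_large_codegree hK hB hG
  refine ⟨A', hA'A, hA', ?_⟩
  have hrep : ∀ d ∈ A' - A', #A / (2 * K) * (#B / (16 * K ^ 2)) ^ 2 ≤
      (#{v ∈ (graphSum G ×ˢ graphSum G) ×ˢ (graphSum G ×ˢ graphSum G) |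
        v.1.1 - v.1.2 + (v.2.1 - v.2.2) = d} : ℝ) := by
    intro d hd
    obtain ⟨a, ha, a', ha', rfl⟩ := mem_sub.1 hd
    obtain ⟨D, -, hAD, hD⟩ := hcommon a ha a' ha'
    calc #A / (2 * K) * (#B / (16 * K ^ 2)) ^ 2 ≤ #D • ((#B / (16 * K ^ 2)) ^ 2 : ℝ) := by
          rw [nsmul_eq_mul]
          gcongr
          exact (div_le_iff₀' (by positivity)).2 hAD
      _ ≤ ∑ c ∈ D, ((codegree (fun x y => (x, y) ∈ G) B a c *
            codegree (fun x y => (x, y) ∈ G) B a' c : ℕ) : ℝ) := by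
          refine card_nsmul_le_sum _ _ _ fun c hc => ?_
          obtain ⟨hac, ha'c⟩ := hD c hc
          rw [sq, Nat.cast_mul]
          gcongr
          · exact (div_le_iff₀' (by positivity)).2 hac
          · exact (div_le_iff₀' (by positivity)).2 ha'c
      _ ≤ _ := mod_cast sum_codegree_mul_codegree_le_card G B D a a'
  have hcount := card_mul_le_card_of_le_card_fiber hrep
  simp only [card_product] at hcount
  push_cast at hcount
  calc #(A' - A') * (#A * (#B : ℝ) ^ 2)
      = 512 * K ^ 5 * (#(A' - A') * (#A / (2 * K) * (#B / (16 * K ^ 2)) ^ 2)) := by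
        field_simp; ring
    _ ≤ 512 * K ^ 5 * (#(graphSum G) * #(graphSum G) * (#(graphSum G) * #(graphSum G))) := by
        gcongr
    _ = 512 * K ^ 5 * (#(graphSum G) : ℝ) ^ 4 := by ring

/-- Each sum `a + y` is `(a - x) + (x + y)` for every neighbour `x` of `y`. -/
lemma card_add_mul_le_card_sub_mul_card_graphSum {A B : Finset α} {G : Finset (α × α)} {c : ℝ}
    (h : ∀ y ∈ B, c ≤ #{x ∈ A | (x, y) ∈ G}) :
    #(A + B) * c ≤ #(A - A) * #(graphSum G) := by
  rw [← Nat.cast_mul, ← card_product]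
  refine card_mul_le_card_of_le_card_fiber (f := fun v => v.1 + v.2) fun w hw => ?_
  obtain ⟨a, ha, y, hy, rfl⟩ := mem_add.1 hw
  refine (h y hy).trans (Nat.cast_le.2 (card_le_card_of_injOn (fun x => (a - x, x + y)) ?_ ?_))
  · intro x hx
    simp only [coe_filter, Set.mem_ofPred_eq, mem_product] at hx ⊢
    exact ⟨⟨sub_mem_sub ha hx.1, add_mem_graphSum hx.2⟩, by abel⟩
  · intro x _ x' _ hxx'
    exact add_right_cancel (Prod.mk.inj hxx').2

end PartialSums

section IteratedDifferences

variable {α : Type*} [AddCommGroup α] [DecidableEq α] {U V : Finset α} {n : ℕ} {x y : α}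

/-- The `n`-fold iterated difference set `nU - nU`. -/
def sumDiff (U : Finset α) (n : ℕ) : Finset α := n • U - n • U

lemma sumDiff_subset_sumDiff (h0 : 0 ∈ U) {m : ℕ} (h : m ≤ n) : sumDiff U m ⊆ sumDiff U n :=
  sub_subset_sub (nsmul_subset_nsmul_right h0 h) (nsmul_subset_nsmul_right h0 h)

lemma sub_mem_sumDiff_one (hx : x ∈ U) (hy : y ∈ U) : x - y ∈ sumDiff U 1 := by
  rw [sumDiff, one_nsmul]
  exact sub_mem_sub hx hy

lemma add_mem_sumDiff {m : ℕ} (hx : x ∈ sumDiff U m) (hy : y ∈ sumDiff U n) :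
    x + y ∈ sumDiff U (m + n) := by
  rw [sumDiff, add_nsmul, add_sub_add_comm]
  exact add_mem_add hx hy

lemma neg_mem_sumDiff (hx : x ∈ sumDiff U n) : -x ∈ sumDiff U n := by
  rw [sumDiff, ← neg_sub]
  exact neg_mem_neg hx

lemma sub_mem_sumDiff {m : ℕ} (hx : x ∈ sumDiff U m) (hy : y ∈ sumDiff U n) :
    x - y ∈ sumDiff U (m + n) := by
  rw [sub_eq_add_neg]
  exact add_mem_sumDiff hx (neg_mem_sumDiff hy)

lemma nsmul_mem_sumDiff (hx : x ∈ sumDiff U n) : ∀ c : ℕ, c • x ∈ sumDiff U (c * n)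
  | 0 => by simp [sumDiff]
  | c + 1 => by
    rw [add_nsmul, one_nsmul, add_one_mul]
    exact add_mem_sumDiff (nsmul_mem_sumDiff hx c) hx

lemma zsmul_mem_sumDiff (hx : x ∈ sumDiff U n) (c : ℤ) : c • x ∈ sumDiff U (c.natAbs * n) := by
  rcases Int.natAbs_eq c with h | h
  · rw [h, natCast_zsmul, Int.natAbs_natCast]
    exact nsmul_mem_sumDiff hx _
  · rw [h, neg_zsmul, natCast_zsmul, Int.natAbs_neg, Int.natAbs_natCast]
    exact neg_mem_sumDiff (nsmul_mem_sumDiff hx _)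

lemma card_sumDiff_le (hV : V.Nonempty) {c : ℝ} (h : #(V + U) ≤ c * #V) (n : ℕ) :
    #(sumDiff U n) ≤ c ^ (2 * n) * #V := by
  have hV₀ : (0 : ℝ) < #V := mod_cast hV.card_pos
  have hpr : (#(n • U - n • U) : ℝ) ≤ (#(V + U) / #V : ℝ) ^ (n + n) * #V := by
    have h := (NNRat.cast_le (K := ℝ)).2 (pluennecke_ruzsa_inequality_nsmul_sub_nsmul_add hV U n n)
    push_cast at h
    exact h
  refine hpr.trans ?_
  rw [← two_mul]
  gcongr
  exact (div_le_iff₀ hV₀).2 h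

end IteratedDifferences

section DensePiece

variable {α : Type*} [AddCommGroup α] [DecidableEq α]

lemma card_add_neg_union_union_zero_le (A B : Finset α) :
    #(A + (-A ∪ B ∪ {0})) ≤ #(A - A) + #(A + B) + #A := by
  rw [add_union, add_union, ← sub_eq_add_neg, singleton_zero, add_zero]
  exact (card_union_le _ _).trans (Nat.add_le_add_right (card_union_le _ _) _)

lemma card_sumDiff_neg_union_le {A B : Finset α} {K n : ℝ} (hK : 10 ≤ K) (hA : A.Nonempty)
    (hnA : n ≤ 2 * K * #A) (hsub : #(A - A) ≤ 512 * K ^ 9 * n)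
    (hadd : #(A + B) ≤ 2048 * K ^ 12 * n) (i : ℕ) :
    #(sumDiff (-A ∪ B ∪ {0}) i) ≤ K ^ (34 * i) * #A := by
  have hsum : (#(A + (-A ∪ B ∪ {0})) : ℝ) ≤ K ^ 17 * #A := by
    have hunion : (#(A + (-A ∪ B ∪ {0})) : ℝ) ≤ #(A - A) + #(A + B) + #A :=
      mod_cast card_add_neg_union_union_zero_le A B
    have h10 := pow_le_pow_left₀ (by norm_num) hK 4
    calc (#(A + (-A ∪ B ∪ {0})) : ℝ)
        ≤ 512 * K ^ 9 * (2 * K * #A) + 2048 * K ^ 12 * (2 * K * #A) + #A := by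
          refine hunion.trans (add_le_add_left (add_le_add (hsub.trans ?_) (hadd.trans ?_)) _) <;>
            gcongr
      _ = (1024 * K ^ 10 + 4096 * K ^ 13 + K ^ 0) * #A := by ring
      _ ≤ (1024 * K ^ 13 + 4096 * K ^ 13 + K ^ 13) * #A := by
          gcongr <;> linarith
      _ ≤ 10 ^ 4 * K ^ 13 * #A := by nlinarith [pow_pos (by linarith : 0 < K) 13]
      _ ≤ K ^ 4 * K ^ 13 * #A := by gcongr
      _ = K ^ 17 * #A := by ring
  have hdiff := card_sumDiff_le hA hsum i
  rwa [← pow_mul, show 17 * (2 * i) = 34 * i by ring] at hdiff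

theorem exists_dense_subsets_card_sumDiff_le {A : Finset α} {G : Finset (α × α)} {K : ℝ}
    (hK : 10 ≤ K) (hA : A.Nonempty)
    (hrow : ∀ x ∈ A, #A ≤ K * #{y ∈ A | (x, y) ∈ G})
    (hcol : ∀ y ∈ A, #A ≤ K * #{x ∈ A | (x, y) ∈ G})
    (hG : #(graphSum G) ≤ K * #A) :
    ∃ A' ⊆ A, ∃ B' ⊆ A, #A ≤ K ^ 2 * #A' ∧ (#A : ℝ) ^ 2 ≤ K ^ 3 * #(A' ×ˢ B' ∩ G) ∧
      ∀ i : ℕ, #(sumDiff (-A' ∪ B' ∪ {0}) i) ≤ K ^ (34 * i) * #A := by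
  have hK₀ : 0 < K := by linarith
  have hA₀ : (0 : ℝ) < #A := mod_cast hA.card_pos
  obtain ⟨A', hA'A, hAA', hsub⟩ := exists_subset_card_sub_mul_le_card_graphSum hK₀ hA hcol
  obtain ⟨B', hB'A, hB', hdense⟩ := exists_subset_forall_card_le_mul_card_column
    (B := A) (r := fun x y => (x, y) ∈ G) hK₀ fun x hx => hrow x (hA'A hx)
  have hA' : A'.Nonempty := card_pos.1 <| Nat.cast_pos.1 <|
    pos_of_mul_pos_right (hA₀.trans_le hAA') (by positivity)
  have hA'₀ : (0 : ℝ) < #A' := mod_cast hA'.card_pos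
  have hsub : #(A' - A') ≤ 512 * K ^ 9 * #A := by
    refine le_of_mul_le_mul_right (hsub.trans ?_) (by positivity : (0 : ℝ) < #A * #A ^ 2)
    calc 512 * K ^ 5 * (#(graphSum G) : ℝ) ^ 4 ≤ 512 * K ^ 5 * (K * #A) ^ 4 := by gcongr
      _ = _ := by ring
  have hadd : #(A' + B') ≤ 2048 * K ^ 12 * #A := by
    have hrep := card_add_mul_le_card_sub_mul_card_graphSum (c := #A' / (2 * K)) fun y hy =>
      (div_le_iff₀' (by positivity)).2 (hB' y hy)
    rw [← mul_div_assoc, div_le_iff₀ (by positivity)] at hrep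
    refine le_of_mul_le_mul_right (hrep.trans ?_) hA'₀
    calc #(A' - A') * #(graphSum G) * (2 * K)
        ≤ 512 * K ^ 9 * #A * (K * (2 * K * #A')) * (2 * K) := by
          gcongr
          exact hG.trans (by gcongr)
      _ = _ := by ring
  have hpow : 2 * K ≤ K ^ 2 := by nlinarith
  refine ⟨A', hA'A, B', hB'A, hAA'.trans (by gcongr), ?_, fun i =>
    (card_sumDiff_neg_union_le hK hA' hAA' hsub hadd i).trans (by gcongr)⟩
  rw [← filter_mem_eq_inter]
  calc (#A : ℝ) ^ 2 ≤ (2 * K * #A') * #A := by rw [sq]; gcongr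
    _ ≤ 2 * K * (2 * K * #{p ∈ A' ×ˢ B' | p ∈ G}) := by rw [mul_assoc]; gcongr
    _ = 4 * K ^ 2 * #{p ∈ A' ×ˢ B' | p ∈ G} := by ring
    _ ≤ K ^ 3 * #{p ∈ A' ×ˢ B' | p ∈ G} := by
        gcongr
        nlinarith [sq_nonneg K]

end DensePiece

section NonConcentration

lemma card_le_add_one_of_forall_sub_le {I : Finset ℤ} {d : ℝ} (hd : 0 ≤ d)
    (h : ∀ x ∈ I, ∀ y ∈ I, (x : ℝ) - y ≤ d) : #I ≤ d + 1 := by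
  rcases I.eq_empty_or_nonempty with rfl | hI
  · simpa using by linarith
  · have hspan := h _ (I.max'_mem hI) _ (I.min'_mem hI)
    have hle : I.min' hI ≤ I.max' hI := I.min'_le_max' hI
    have hcard : (#I : ℤ) ≤ I.max' hI + 1 - I.min' hI := by
      have hsub : I ⊆ Icc (I.min' hI) (I.max' hI) := fun x hx =>
        mem_Icc.2 ⟨I.min'_le x hx, I.le_max' x hx⟩
      have hcard := card_le_card hsub
      rw [Int.card_Icc] at hcard
      lia
    have hcard' : (#I : ℝ) ≤ I.max' hI + 1 - I.min' hI := mod_cast hcard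
    linarith

lemma exists_subset_pairwise_lt_dist {α : Type*} [PseudoMetricSpace α] (X : Finset α) {d : ℝ}
    (hd : 0 ≤ d) :
    ∃ Z ⊆ X, (Z : Set α).Pairwise (fun z z' => d < dist z z') ∧ ∀ x ∈ X, ∃ z ∈ Z, dist x z ≤ d := by
  set S := X.powerset.filter fun Z : Finset α => (Z : Set α).Pairwise fun z z' => d < dist z z'
    with hS
  obtain ⟨Z, hZ⟩ := S.exists_maximal ⟨∅, by simp [hS]⟩
  obtain ⟨hZX, hsep⟩ := mem_filter.1 hZ.prop
  rw [mem_powerset] at hZX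
  refine ⟨Z, hZX, hsep, fun x hx => ?_⟩
  by_contra! hfar
  have hins : insert x Z ∈ S := by
    rw [mem_filter, mem_powerset, coe_insert]
    refine ⟨insert_subset hx hZX, hsep.insert fun z hz _ => ⟨hfar z hz, ?_⟩⟩
    rw [dist_comm]
    exact hfar z hz
  have hxZ := hZ.le_of_ge hins (subset_insert x Z) (mem_insert_self x Z)
  exact (hfar x hxZ).not_ge (by rwa [dist_self])

/-- `A` is `(s, K)`-non-concentrated: an interval of length `l` contains at most `K * l ^ s` points
of `A`. The scale is normalised so that only `l ≥ 1` matters. -/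
def NonConcentrated (s K : ℝ) (A : Finset ℤ) : Prop :=
  ∀ x l : ℝ, 1 ≤ l → #(A.filter fun t : ℤ => x ≤ t ∧ t ≤ x + l) ≤ K * l ^ s

variable {s K d : ℝ} {A B : Finset ℤ}

lemma NonConcentrated.mono {K' : ℝ} (hA : NonConcentrated s K A) (hBA : B ⊆ A) (hK : K ≤ K') :
    NonConcentrated s K' B := fun x l hl =>
  calc (#(B.filter fun t : ℤ => x ≤ t ∧ t ≤ x + l) : ℝ)
      ≤ #(A.filter fun t : ℤ => x ≤ t ∧ t ≤ x + l) :=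
        mod_cast card_le_card (filter_subset_filter _ hBA)
    _ ≤ K * l ^ s := hA x l hl
    _ ≤ K' * l ^ s := by gcongr

lemma NonConcentrated.card_filter_abs_sub_le (hA : NonConcentrated s K A) (hd : 1 ≤ 2 * d) (x : ℝ) :
    #(A.filter fun t : ℤ => |(t : ℝ) - x| ≤ d) ≤ K * (2 * d) ^ s := by
  refine le_trans (Nat.cast_le.2 (card_le_card fun t ht => ?_)) (hA (x - d) (2 * d) hd)
  rw [mem_filter, abs_le] at ht
  exact mem_filter.2 ⟨ht.1, by linarith, by linarith⟩

lemma NonConcentrated.exists_separated_subset (hA : NonConcentrated s K A) (hd : 1 ≤ 2 * d) :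
    ∃ Z ⊆ A, (Z : Set ℤ).Pairwise (fun z z' => d < |(z : ℝ) - z'|) ∧
      #A ≤ K * (2 * d) ^ s * #Z := by
  obtain ⟨Z, hZA, hsep, hnear⟩ := exists_subset_pairwise_lt_dist A (by linarith : 0 ≤ d)
  choose! near hnearZ hdist using hnear
  refine ⟨Z, hZA, hsep, card_le_mul_card_of_card_fiber_le hnearZ fun z _ => ?_⟩
  refine le_trans (Nat.cast_le.2 (card_le_card fun x hx => ?_)) (hA.card_filter_abs_sub_le hd z)
  obtain ⟨hxA, rfl⟩ := mem_filter.1 hx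
  exact mem_filter.2 ⟨hxA, hdist x hxA⟩

/-- A difference `b - a` with `b` in an interval determines an interval of the same length
containing `a`. -/
lemma NonConcentrated.of_card_sub_le {c : ℝ} (hA : NonConcentrated s K A) (hAne : A.Nonempty)
    (hK : 0 ≤ K) (h : #(B - A) ≤ c * #A) : NonConcentrated s (K * c) B := by
  intro x l hl
  set I := B.filter fun t : ℤ => x ≤ t ∧ t ≤ x + l with hI
  have hA₀ : (0 : ℝ) < #A := mod_cast hAne.card_pos
  have hfib : (#(I ×ˢ A) : ℝ) ≤ K * l ^ s * #(B - A) := by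
    refine card_le_mul_card_of_card_fiber_le (f := fun p => p.1 - p.2)
      (fun p hp => ?_) fun w _ => ?_
    · obtain ⟨hpI, hpA⟩ := mem_product.1 hp
      exact sub_mem_sub (mem_of_mem_filter _ hpI) hpA
    · refine le_trans (Nat.cast_le.2 (card_le_card_of_injOn Prod.snd ?_ ?_)) (hA (x - w) l hl)
      · rintro ⟨b, a⟩ hp
        simp only [hI, coe_filter, mem_product, mem_filter, Set.mem_ofPred_eq] at hp ⊢
        obtain ⟨⟨⟨_, hxb, hbx⟩, ha⟩, rfl⟩ := hp
        push_cast
        exact ⟨ha, by linarith, by linarith⟩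
      · rintro ⟨b, a⟩ hp ⟨b', a'⟩ hp' (rfl : a = a')
        simp only [coe_filter, Set.mem_ofPred_eq] at hp hp'
        exact Prod.ext (sub_left_injective (hp.2.trans hp'.2.symm)) rfl
  refine le_of_mul_le_mul_right ?_ hA₀
  calc (#I : ℝ) * #A = #(I ×ˢ A) := by rw [card_product, Nat.cast_mul]
    _ ≤ K * l ^ s * #(B - A) := hfib
    _ ≤ K * l ^ s * (c * #A) := by gcongr
    _ = K * c * l ^ s * #A := by ring

lemma mul_rpow_le_mul_rpow {a b : ℝ} (hs : s ≤ 1) (ha : 1 ≤ a) (hb : 0 ≤ b) :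
    (a * b) ^ s ≤ a * b ^ s := by
  rw [mul_rpow (by linarith) hb]
  gcongr
  exact rpow_le_self_of_one_le ha hs

end NonConcentration

section Cells

/-- The index of the interval `[kN, (k + 1)N)` that contains `x`. -/
noncomputable def cell (N x : ℝ) : ℤ := ⌊x / N⌋

variable {N x y : ℝ}

lemma mul_cell_le (hN : 0 < N) (x : ℝ) : N * cell N x ≤ x := by
  rw [← le_div_iff₀' hN]
  exact Int.floor_le _

lemma lt_mul_cell_add (hN : 0 < N) (x : ℝ) : x < N * cell N x + N := by
  rw [← mul_add_one, ← div_lt_iff₀' hN]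
  exact Int.lt_floor_add_one _

lemma abs_sub_lt_of_cell_eq (hN : 0 < N) (h : cell N x = cell N y) : |x - y| < N := by
  have hlt := Int.abs_sub_lt_one_of_floor_eq_floor h
  rwa [← sub_div, abs_div, abs_of_pos hN, div_lt_one hN] at hlt

lemma cell_add_eq_or (N x y : ℝ) :
    cell N (x + y) = cell N x + cell N y ∨ cell N (x + y) = cell N x + cell N y + 1 := by
  have h₁ := Int.le_floor_add (x / N) (y / N)
  have h₂ := Int.le_floor_add_floor (x / N) (y / N)
  simp only [cell, add_div]
  lia

lemma abs_cell_add_sub_cell_le (hN : 0 < N) (hy : |y| < 2 * N) :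
    |cell N (x + y) - cell N x| ≤ 2 := by
  have hy' : -2 ≤ cell N y ∧ cell N y ≤ 1 := by
    rw [abs_lt] at hy
    rw [cell, Int.le_floor, ← Int.lt_add_one_iff, Int.floor_lt, le_div_iff₀ hN, div_lt_iff₀ hN]
    push_cast
    exact ⟨by linarith, by linarith⟩
  rw [abs_le]
  rcases cell_add_eq_or N x y with h | h <;> lia

/-- The cells of width `N` that meet the dilate `rB`. -/
noncomputable def dilateCells (N : ℝ) (B : Finset ℤ) (r : ℤ) : Finset ℤ :=
  B.image fun b : ℤ => cell N (r * b)

lemma cell_mem_dilateCells {B : Finset ℤ} {b : ℤ} (N : ℝ) (r : ℤ) (hb : b ∈ B) :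
    cell N (r * b) ∈ dilateCells N B r :=
  mem_image_of_mem (fun b : ℤ => cell N (r * b)) hb

/-- The cells of width `N` that meet the sum of dilates `pX + rY`. -/
noncomputable def sumCells (N : ℝ) (X Y : Finset ℤ) (p r : ℤ) : Finset ℤ :=
  (X ×ˢ Y).image fun b : ℤ × ℤ => cell N (p * b.1 + r * b.2)

lemma cell_mem_sumCells {X Y : Finset ℤ} {x y : ℤ} (N : ℝ) (p r : ℤ) (hx : x ∈ X) (hy : y ∈ Y) :
    cell N (p * x + r * y) ∈ sumCells N X Y p r :=
  mem_image.2 ⟨(x, y), mk_mem_product hx hy, rfl⟩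

lemma card_dilateCells_add_le (N : ℝ) (B : Finset ℤ) (p r : ℤ) :
    #(dilateCells N B p + dilateCells N B r) ≤ 2 * #(sumCells N B B p r) := by
  have hsub : dilateCells N B p + dilateCells N B r ⊆ sumCells N B B p r + {0, -1} := by
    rw [add_subset_iff]
    simp only [dilateCells, mem_image, forall_exists_index, and_imp, forall_apply_eq_imp_iff₂]
    intro x hx y hy
    have hmem := cell_mem_sumCells N p r hx hy
    rw [mem_add]
    rcases cell_add_eq_or N (p * x) (r * y) with h | h
    · exact ⟨_, hmem, 0, by simp, by rw [h, add_zero]⟩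
    · exact ⟨_, hmem, -1, by simp, by rw [h]; ring⟩
  calc #(dilateCells N B p + dilateCells N B r) ≤ #(sumCells N B B p r + {0, -1}) :=
        card_le_card hsub
    _ ≤ #(sumCells N B B p r) * #({0, -1} : Finset ℤ) := card_add_le
    _ = 2 * #(sumCells N B B p r) := by rw [mul_comm]; rfl

end Cells

section QuadraticForm

/-- The binary quadratic form `a x² + b xy + c y²`. -/
def binaryForm {R : Type*} [CommRing R] (a b c x y : R) : R := a * x ^ 2 + b * (x * y) + c * y ^ 2

lemma two_mul_binaryForm_sub {R : Type*} [CommRing R] (a b c x y x' y' : R) :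
    2 * (binaryForm a b c x y - binaryForm a b c x' y') =
      (x + x') * (2 * a * (x - x') + b * (y - y')) +
        (y + y') * (b * (x - x') + 2 * c * (y - y')) := by
  simp only [binaryForm]
  ring

/-- The pairs `(q, t) ∈ Q × T` at which the linear form `p q + r t` is small at scale `N`. -/
noncomputable def smallPairs (N : ℝ) (Q T : Finset ℤ) (p r : ℤ) : Finset (ℤ × ℤ) :=
  (Q ×ˢ T).filter fun v : ℤ × ℤ => |(p : ℝ) * v.1 + r * v.2| < 2 * N

variable {N : ℝ} {A B Q T X Y : Finset ℤ} {p r : ℤ}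

lemma card_smallPairs_le (hN : 0 ≤ N) (hp : 0 < p) :
    #(smallPairs N Q T p r) ≤ (4 * N / p + 1) * #T := by
  have hp₀ : (0 : ℝ) < p := mod_cast hp
  refine card_le_mul_card_of_card_fiber_le (f := Prod.snd)
    (fun v hv => (mem_product.1 (mem_of_mem_filter _ hv)).2) fun t _ => ?_
  set S := {v ∈ smallPairs N Q T p r | v.2 = t} with hS
  have hinj : Set.InjOn Prod.fst (S : Set (ℤ × ℤ)) := fun v hv v' hv' h =>
    Prod.ext h ((mem_filter.1 hv).2.trans (mem_filter.1 hv').2.symm)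
  rw [← card_image_of_injOn hinj]
  refine card_le_add_one_of_forall_sub_le (by positivity) ?_
  simp only [hS, mem_image, mem_filter, smallPairs, Prod.exists, exists_and_right, exists_eq_right,
    and_imp]
  rintro q - hq q' - hq'
  rw [abs_lt] at hq hq'
  rw [le_div_iff₀ hp₀]
  linarith

lemma card_smallPairs_le_of_div_le {L : ℝ} (hN : 0 < N) (hL : 1 ≤ L) (hp : 2 * (N / L) ≤ p) :
    #(smallPairs N Q T p r) ≤ 3 * L * #T := by
  have hp₀ : (0 : ℝ) < p := by linarith [show 0 < N / L by positivity]
  have hNp : 4 * N / p ≤ 2 * L := by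
    rw [div_le_iff₀ hp₀]
    rw [← mul_div_assoc, div_le_iff₀ (by positivity)] at hp
    linarith
  refine (card_smallPairs_le hN.le (mod_cast hp₀)).trans ?_
  gcongr
  linarith

/-- Translating a point of a cell of `pX + rY` by a pair in `smallPairs` moves its cell by at most
two, so the pair `(cell, translation)` is determined up to five choices by the translated point. -/
lemma card_sumCells_mul_card_smallPairs_le (hN : 0 < N) :
    #(sumCells N X Y p r) * #(smallPairs N Q T p r) ≤ 5 * (#(X + Q) * #(Y + T)) := by
  have hrep : ∀ w ∈ sumCells N X Y p r, ∃ b ∈ X ×ˢ Y, cell N (p * b.1 + r * b.2) = w := fun w hw =>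
    mem_image.1 hw
  choose! rep hrep hcell using hrep
  rw [← card_product, ← card_product]
  have hcount : (#(sumCells N X Y p r ×ˢ smallPairs N Q T p r) : ℝ) ≤
      5 * #((X + Q) ×ˢ (Y + T)) := by
    refine card_le_mul_card_of_card_fiber_le (f := fun v => rep v.1 + v.2) ?_ fun u _ => ?_
    · rintro ⟨w, v⟩ hv
      obtain ⟨hw, hv⟩ := mem_product.1 hv
      obtain ⟨hx, hy⟩ := mem_product.1 (hrep w hw)
      obtain ⟨hq, ht⟩ := mem_product.1 (mem_of_mem_filter _ hv)
      exact mem_product.2 ⟨add_mem_add hx hq, add_mem_add hy ht⟩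
    · have hIcc : #(Icc (cell N (p * u.1 + r * u.2) - 2) (cell N (p * u.1 + r * u.2) + 2)) = 5 := by
        rw [Int.card_Icc]
        lia
      rw [← Nat.cast_ofNat, Nat.cast_le, ← hIcc]
      refine card_le_card_of_injOn Prod.fst ?_ ?_
      · rintro ⟨w, v⟩ hv
        obtain ⟨hwv, rfl⟩ := mem_filter.1 hv
        obtain ⟨hw, hv⟩ := mem_product.1 hwv
        have hmove := abs_cell_add_sub_cell_le (x := p * (rep w).1 + r * (rep w).2) hN
          (mem_filter.1 hv).2
        rw [hcell w hw, abs_le] at hmove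
        have hsum : (p * ((rep w + v).1 : ℤ) + r * ((rep w + v).2 : ℤ) : ℝ) =
            p * (rep w).1 + r * (rep w).2 + (p * v.1 + r * v.2) := by
          simp only [Prod.fst_add, Prod.snd_add]
          push_cast
          ring
        rw [mem_coe, hsum, mem_Icc]
        exact ⟨by lia, by lia⟩
      · rintro ⟨w, v⟩ hv ⟨w', v'⟩ hv' (rfl : w = w')
        have h := (mem_filter.1 hv).2.trans (mem_filter.1 hv').2.symm
        exact Prod.ext rfl (add_left_cancel h)
  exact_mod_cast hcount

variable {a b c : ℤ} {G : Finset (ℤ × ℤ)}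

/-- By `two_mul_binaryForm_sub`, a collision of cells of the form makes a linear form small at the
polar coordinates of the difference, which together with the sum recover the collision. -/
lemma card_collisions_binaryForm_le_sum_card_smallPairs (hdisc : b ^ 2 - 4 * a * c ≠ 0)
    (hN : 0 < N) (hG : G ⊆ A ×ˢ B) {M : ℝ} (hM : ∀ p ∈ G, M ≤ p.1)
    (hQ : ∀ x ∈ A, ∀ x' ∈ A, ∀ y ∈ B, ∀ y' ∈ B, 2 * a * (x - x') + b * (y - y') ∈ Q)
    (hT : ∀ x ∈ A, ∀ x' ∈ A, ∀ y ∈ B, ∀ y' ∈ B, b * (x - x') + 2 * c * (y - y') ∈ T) :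
    #{e ∈ G ×ˢ G | cell N (binaryForm a b c e.1.1 e.1.2 : ℤ) =
        cell N (binaryForm a b c e.2.1 e.2.2 : ℤ)} ≤
      ∑ p ∈ (A + A).filter (fun p : ℤ => 2 * M ≤ p), ∑ r ∈ B + B, #(smallPairs N Q T p r) := by
  rw [← sum_product', ← card_sigma]
  apply card_le_card_of_injOn fun e => (⟨(e.1.1 + e.2.1, e.1.2 + e.2.2),
    2 * a * (e.1.1 - e.2.1) + b * (e.1.2 - e.2.2),
    b * (e.1.1 - e.2.1) + 2 * c * (e.1.2 - e.2.2)⟩ : Σ _ : ℤ × ℤ, ℤ × ℤ)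
  · rintro ⟨⟨x, y⟩, x', y'⟩ he
    simp only [coe_filter, mem_product, Set.mem_ofPred_eq] at he
    obtain ⟨⟨hxy, hxy'⟩, hcell⟩ := he
    obtain ⟨hx, hy⟩ := mem_product.1 (hG hxy)
    obtain ⟨hx', hy'⟩ := mem_product.1 (hG hxy')
    have hclose := abs_sub_lt_of_cell_eq hN hcell
    have hpolar := congrArg (Int.cast : ℤ → ℝ) (two_mul_binaryForm_sub a b c x y x' y')
    have hMx := hM _ hxy
    have hMx' := hM _ hxy'
    simp only [mem_coe, mem_sigma, mem_product, mem_filter, smallPairs]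
    refine ⟨⟨⟨add_mem_add hx hx', by push_cast; linarith⟩, add_mem_add hy hy'⟩,
      ⟨hQ x hx x' hx' y hy y' hy', hT x hx x' hx' y hy y' hy'⟩, ?_⟩
    push_cast at hpolar ⊢
    rw [← hpolar, abs_mul, abs_two]
    linarith
  · rintro ⟨⟨x, y⟩, x', y'⟩ _ ⟨⟨u, v⟩, u', v'⟩ _ h
    simp only [Sigma.mk.injEq, heq_eq_eq, Prod.mk.injEq] at h
    obtain ⟨⟨hx, hy⟩, hq, ht⟩ := h
    have hdx : (b ^ 2 - 4 * a * c) * ((x - x') - (u - u')) = 0 := by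
      linear_combination b * ht - 2 * c * hq
    have hdy : (b ^ 2 - 4 * a * c) * ((y - y') - (v - v')) = 0 := by
      linear_combination b * hq - 2 * a * ht
    have hdx := (mul_eq_zero.1 hdx).resolve_left hdisc
    have hdy := (mul_eq_zero.1 hdy).resolve_left hdisc
    simp only [Prod.mk.injEq]
    lia

lemma sq_card_le_mul_sum_card_smallPairs (hdisc : b ^ 2 - 4 * a * c ≠ 0) (hN : 0 < N)
    (hG : G ⊆ A ×ˢ B) {M k : ℝ} (hM : ∀ p ∈ G, M ≤ p.1)
    (hQ : ∀ x ∈ A, ∀ x' ∈ A, ∀ y ∈ B, ∀ y' ∈ B, 2 * a * (x - x') + b * (y - y') ∈ Q)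
    (hT : ∀ x ∈ A, ∀ x' ∈ A, ∀ y ∈ B, ∀ y' ∈ B, b * (x - x') + 2 * c * (y - y') ∈ T)
    (hcells : #(G.image fun p => cell N (binaryForm a b c p.1 p.2 : ℤ)) ≤ k) :
    (#G : ℝ) ^ 2 ≤ k * ∑ p ∈ (A + A).filter (fun p : ℤ => 2 * M ≤ p),
      ∑ r ∈ B + B, (#(smallPairs N Q T p r) : ℝ) := by
  have henergy := sq_card_le_card_image_mul_card_collisions G
    fun p => cell N (binaryForm a b c p.1 p.2 : ℤ)
  have hcollisions := card_collisions_binaryForm_le_sum_card_smallPairs hdisc hN hG hM hQ hT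
  rify at henergy hcollisions
  exact henergy.trans (mul_le_mul hcells hcollisions (Nat.cast_nonneg _)
    ((Nat.cast_nonneg _).trans hcells))

variable {L h k g : ℝ}

/-- One coefficient `p₀` and many coefficients `r` carry most of the collisions; for these the
sums `p₀ X + r X` occupy few cells. -/
theorem exists_forall_card_sumCells_le (hdisc : b ^ 2 - 4 * a * c ≠ 0) (hN : 0 < N) (hL : 1 ≤ L)
    (hk : 0 < k) (hg : 0 < g) (hG : G ⊆ A ×ˢ B) (hpos : ∀ p ∈ G, N / L ≤ p.1)
    (hQ : ∀ x ∈ A, ∀ x' ∈ A, ∀ y ∈ B, ∀ y' ∈ B, 2 * a * (x - x') + b * (y - y') ∈ Q)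
    (hT : ∀ x ∈ A, ∀ x' ∈ A, ∀ y ∈ B, ∀ y' ∈ B, b * (x - x') + 2 * c * (y - y') ∈ T)
    (hAA : #(A + A) ≤ h) (hBB : #(B + B) ≤ h) (hTh : #T ≤ h)
    (hXQ : #(X + Q) ≤ h) (hXT : #(X + T) ≤ h)
    (hcells : #(G.image fun p => cell N (binaryForm a b c p.1 p.2 : ℤ)) ≤ k) (hgG : g ≤ #G) :
    ∃ p₀ ∈ A + A, N / L ≤ p₀ ∧ ∃ R ⊆ B + B, g ^ 2 ≤ 6 * L * k * h ^ 2 * #R ∧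
      ∀ r ∈ R, #(sumCells N X X p₀ r) * g ^ 2 ≤ 10 * k * h ^ 4 := by
  set P := (A + A).filter fun p : ℤ => 2 * (N / L) ≤ p with hP
  have hh : 0 ≤ h := (Nat.cast_nonneg _).trans hAA
  have henergy : g ^ 2 / k ≤ ∑ p ∈ P, ∑ r ∈ B + B, (#(smallPairs N Q T p r) : ℝ) := by
    rw [div_le_iff₀' hk]
    exact (pow_le_pow_left₀ hg.le hgG 2).trans
      (sq_card_le_mul_sum_card_smallPairs hdisc hN hG hpos hQ hT hcells)
  have hPh : #P ≤ h := le_trans (mod_cast card_filter_le _ _) hAA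
  obtain ⟨p₀, hp₀, hmany⟩ := exists_le_mul_of_le_sum (by positivity) hPh henergy
  obtain ⟨hp₀A, hp₀N⟩ := mem_filter.1 hp₀
  have hh₀ : 0 < h := hh.lt_of_ne fun h0 => by
    rw [← h0, zero_mul] at hmany
    exact hmany.not_gt (by positivity)
  rw [← div_le_iff₀' hh₀] at hmany
  refine ⟨p₀, hp₀A, le_trans (by linarith [show 0 < N / L by positivity]) hp₀N,
    {r ∈ B + B | g ^ 2 / k / h ≤ 2 * h * #(smallPairs N Q T p₀ r)}, filter_subset _ _, ?_,
    fun r hr => ?_⟩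
  · have hpop := le_two_mul_sum_filter_of_le_sum (by positivity) hBB hmany
    have hsmall : ∀ r ∈ B + B, (#(smallPairs N Q T p₀ r) : ℝ) ≤ 3 * L * h := fun r _ =>
      (card_smallPairs_le_of_div_le hN hL hp₀N).trans (by gcongr)
    have hsum := hpop.trans (mul_le_mul_of_nonneg_left (sum_le_card_nsmul _ _ _ fun r hr =>
      hsmall r (mem_of_mem_filter _ hr)) zero_le_two)
    rw [nsmul_eq_mul, div_le_iff₀ hh₀, div_le_iff₀ hk] at hsum
    linarith
  · have hpop := (mem_filter.1 hr).2
    rw [div_div, div_le_iff₀ (by positivity)] at hpop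
    have hcount : (#(sumCells N X X p₀ r) * #(smallPairs N Q T p₀ r) : ℝ) ≤ 5 * (h * h) :=
      le_trans (mod_cast card_sumCells_mul_card_smallPairs_le hN)
        (mul_le_mul_of_nonneg_left (mul_le_mul hXQ hXT (Nat.cast_nonneg _) hh) (by norm_num))
    calc #(sumCells N X X p₀ r) * g ^ 2
        ≤ #(sumCells N X X p₀ r) * (2 * h * #(smallPairs N Q T p₀ r) * (k * h)) := by gcongr
      _ = #(sumCells N X X p₀ r) * #(smallPairs N Q T p₀ r) * (2 * k * h ^ 2) := by ring
      _ ≤ 5 * (h * h) * (2 * k * h ^ 2) := by gcongr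
      _ = 10 * k * h ^ 4 := by ring

end QuadraticForm

section SmallDilateSums

/-- `R` is an `s`-dimensional set of integers at scale `N` for which all the sums `p₀ R + r R`, with
`r ∈ R ∪ {p₀}`, occupy few cells of width `N`, up to factors bounded in terms of `K`. -/
structure SmallDilateSums (s N K : ℝ) (p₀ : ℤ) (R : Finset ℤ) : Prop where
  exponent_pos : 0 < s
  exponent_lt_one : s < 1
  one_le_scale : 1 ≤ N
  ten_le : 10 ≤ K
  scale_le : N ≤ K * p₀
  mem_range : ∀ r ∈ R, 0 ≤ (r : ℝ) ∧ r ≤ 2 * N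
  le_card : N ^ s ≤ K * #R
  nonConcentrated : NonConcentrated s K R
  card_add_le : ∀ r ∈ insert p₀ R, #(dilateCells N R p₀ + dilateCells N R r) ≤ K * N ^ s

/-- The cells of width `N` that meet one of the dilates `rR` with `r ∈ T`, together with `0`. -/
noncomputable def dilateHull (N : ℝ) (R T : Finset ℤ) : Finset ℤ :=
  {0} ∪ T.biUnion fun r => dilateCells N R r

lemma cell_mem_dilateHull {R T : Finset ℤ} {r x : ℤ} (N : ℝ) (hr : r ∈ T) (hx : x ∈ R) :
    cell N (r * x) ∈ dilateHull N R T :=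
  mem_union_right _ (mem_biUnion.2 ⟨r, hr, cell_mem_dilateCells N r hx⟩)

lemma zero_mem_dilateHull (N : ℝ) (R T : Finset ℤ) : 0 ∈ dilateHull N R T :=
  mem_union_left _ (mem_singleton_self 0)

lemma cell_mul_sub_mem_sumDiff {R T : Finset ℤ} {a b x : ℤ} (N : ℝ) (ha : a ∈ T) (hb : b ∈ T)
    (hx : x ∈ R) :
    cell N (a * x) - cell N (b * x) ∈ sumDiff (dilateHull N R T) 1 :=
  sub_mem_sumDiff_one (cell_mem_dilateHull N ha hx) (cell_mem_dilateHull N hb hx)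

namespace SmallDilateSums

variable {s N K : ℝ} {p₀ : ℤ} {R : Finset ℤ}

lemma scale_pos (S : SmallDilateSums s N K p₀ R) : 0 < N := one_pos.trans_le S.one_le_scale

lemma pos (S : SmallDilateSums s N K p₀ R) : 0 < K := by linarith [S.ten_le]

lemma coeff_pos (S : SmallDilateSums s N K p₀ R) : (0 : ℝ) < p₀ :=
  pos_of_mul_pos_right (S.scale_pos.trans_le S.scale_le) S.pos.le

lemma abs_sub_le (S : SmallDilateSums s N K p₀ R) {x y : ℤ} (hx : x ∈ R) (hy : y ∈ R) :
    |(x : ℝ) - y| ≤ 2 * N := by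
  obtain ⟨hx₀, hx₁⟩ := S.mem_range x hx
  obtain ⟨hy₀, hy₁⟩ := S.mem_range y hy
  exact abs_le.2 ⟨by linarith, by linarith⟩

lemma card_le_mul_card_dilateCells (S : SmallDilateSums s N K p₀ R) :
    #R ≤ (K + 1) * #(dilateCells N R p₀) := by
  refine card_le_mul_card_of_card_fiber_le (f := fun x : ℤ => cell N (p₀ * x))
    (fun x hx => cell_mem_dilateCells N p₀ hx) fun w _ =>
    card_le_add_one_of_forall_sub_le S.pos.le fun x hx y hy => ?_
  have hclose := abs_sub_lt_of_cell_eq S.scale_pos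
    ((mem_filter.1 hx).2.trans (mem_filter.1 hy).2.symm)
  rw [← mul_sub] at hclose
  refine le_of_mul_le_mul_left ?_ S.coeff_pos
  linarith [le_abs_self ((p₀ : ℝ) * (x - y)), S.scale_le]

lemma card_pos (S : SmallDilateSums s N K p₀ R) : (0 : ℝ) < #R :=
  pos_of_mul_pos_right ((rpow_pos_of_pos S.scale_pos s).trans_le S.le_card) S.pos.le

lemma nonempty_dilateCells (S : SmallDilateSums s N K p₀ R) : (dilateCells N R p₀).Nonempty :=
  (Finset.card_pos.1 (Nat.cast_pos.1 S.card_pos)).image _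

lemma card_dilateCells_le (S : SmallDilateSums s N K p₀ R) :
    #(dilateCells N R p₀) ≤ K * N ^ s :=
  le_trans (mod_cast card_le_card_add_right S.nonempty_dilateCells)
    (S.card_add_le p₀ (mem_insert_self _ _))

lemma card_dilateCells_add_dilateHull_le (S : SmallDilateSums s N K p₀ R) {T : Finset ℤ}
    (hT : T ⊆ insert p₀ R) (hT₅ : #T ≤ 5) :
    #(dilateCells N R p₀ + dilateHull N R T) ≤ 6 * (K * N ^ s) := by
  set D := dilateCells N R p₀
  have hDle : (#D : ℝ) ≤ K * N ^ s := S.card_dilateCells_le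
  have hbiUnion : (#(D + T.biUnion fun r => dilateCells N R r) : ℝ) ≤ 5 * (K * N ^ s) := by
    have hcard : #(D + T.biUnion fun r => dilateCells N R r) ≤
        ∑ r ∈ T, #(D + dilateCells N R r) := by
      refine (card_le_card (add_subset_iff.2 fun x hx y hy => ?_)).trans card_biUnion_le
      obtain ⟨r, hr, hy⟩ := mem_biUnion.1 hy
      exact mem_biUnion.2 ⟨r, hr, add_mem_add hx hy⟩
    calc (#(D + T.biUnion fun r => dilateCells N R r) : ℝ)
        ≤ ∑ r ∈ T, (#(D + dilateCells N R r) : ℝ) := mod_cast hcard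
      _ ≤ #T * (K * N ^ s) := by
          rw [← nsmul_eq_mul]
          exact sum_le_card_nsmul _ _ _ fun r hr => S.card_add_le r (hT hr)
      _ ≤ 5 * (K * N ^ s) := mul_le_mul_of_nonneg_right (mod_cast hT₅)
          ((Nat.cast_nonneg _).trans hDle)
  have hunion : (#(D + dilateHull N R T) : ℝ) ≤
      #D + #(D + T.biUnion fun r => dilateCells N R r) := by
    rw [dilateHull, add_union, singleton_zero, add_zero]
    exact mod_cast card_union_le _ _
  linarith

lemma card_sumDiff_dilateHull_le (S : SmallDilateSums s N K p₀ R) {T : Finset ℤ}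
    (hT : T ⊆ insert p₀ R) (hT₅ : #T ≤ 5) :
    #(sumDiff (dilateHull N R T) 5) ≤ K ^ 51 * N ^ s := by
  set D := dilateCells N R p₀
  have hK := S.ten_le
  have hDR := S.card_le_mul_card_dilateCells
  have hDhull := S.card_dilateCells_add_dilateHull_le hT hT₅
  have hND : N ^ s ≤ 2 * K ^ 2 * #D := by
    calc N ^ s ≤ K * ((K + 1) * #D) := S.le_card.trans (mul_le_mul_of_nonneg_left hDR S.pos.le)
      _ ≤ K * ((K + K) * #D) := by gcongr; linarith
      _ = 2 * K ^ 2 * #D := by ring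
  have hgrowth : (#(D + dilateHull N R T) : ℝ) ≤ K ^ 5 * #D := by
    calc (#(D + dilateHull N R T) : ℝ) ≤ 6 * (K * (2 * K ^ 2 * #D)) := hDhull.trans (by gcongr)
      _ = 12 * K ^ 3 * #D := by ring
      _ ≤ K ^ 2 * K ^ 3 * #D := by gcongr; nlinarith
      _ = K ^ 5 * #D := by ring
  calc (#(sumDiff (dilateHull N R T) 5) : ℝ) ≤ (K ^ 5) ^ (2 * 5) * #D :=
        card_sumDiff_le S.nonempty_dilateCells hgrowth 5
    _ ≤ (K ^ 5) ^ (2 * 5) * (K * N ^ s) := by gcongr; exact S.card_dilateCells_le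
    _ = K ^ 51 * N ^ s := by ring

end SmallDilateSums

lemma abs_mul_sub_mul_cell_lt {N : ℝ} (hN : 0 < N) (p x x' : ℤ) :
    |p * ((x : ℝ) - x') - N * (cell N (p * x) - cell N (p * x') : ℤ)| < N := by
  have h := mul_cell_le hN (p * x)
  have h' := mul_cell_le hN (p * x')
  have hlt := lt_mul_cell_add hN (p * x)
  have hlt' := lt_mul_cell_add hN (p * x')
  rw [abs_lt]
  push_cast
  constructor <;> linarith

lemma abs_sub_mul_sub_mul_cell_lt {N : ℝ} (hN : 0 < N) (a b x x' : ℤ) :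
    |((a : ℝ) - b) * (x - x') -
      N * ((cell N (a * x) - cell N (b * x)) - (cell N (a * x') - cell N (b * x')) : ℤ)| <
      2 * N := by
  have ha := abs_lt.1 (abs_mul_sub_mul_cell_lt hN a x x')
  have hb := abs_lt.1 (abs_mul_sub_mul_cell_lt hN b x x')
  rw [abs_lt]
  push_cast at ha hb ⊢
  constructor <;> linarith

end SmallDilateSums

section Slopes

/-- The slopes `(a - b) / (c - d)` determined by `R` with denominators at least `W`. -/
def slopes (R : Finset ℤ) (W : ℝ) : Set ℝ :=
  {q | ∃ a ∈ R, ∃ b ∈ R, ∃ c ∈ R, ∃ d ∈ R, W ≤ (c : ℝ) - d ∧ q = ((a : ℝ) - b) / (c - d)}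

lemma div_mem_slopes {R : Finset ℤ} {W : ℝ} {a b c d : ℤ} (ha : a ∈ R) (hb : b ∈ R) (hc : c ∈ R)
    (hd : d ∈ R) (hW : W ≤ |(c : ℝ) - d|) : ((a : ℝ) - b) / (c - d) ∈ slopes R W := by
  rcases abs_choice ((c : ℝ) - d) with h | h <;> rw [h] at hW
  · exact ⟨a, ha, b, hb, c, hc, d, hd, hW, rfl⟩
  · refine ⟨b, hb, a, ha, d, hd, c, hc, by linarith, ?_⟩
    rw [← neg_sub (a : ℝ), ← neg_sub (c : ℝ), neg_div_neg_eq]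

end Slopes

section Gap

lemma eq_zero_of_abs_add_mul_lt {t w μ p N K : ℝ} (hμ : 1 ≤ μ) (hN : 0 < N) (hK : 0 < K)
    (hp : N ≤ K * p) (ht : |t| ≤ 10 * μ * N) (hform : |t + p * w| < 9 * N)
    (hsep : w ≠ 0 → 19 * K * μ < |w|) : w = 0 := by
  by_contra hne
  have hp₀ : 0 < p := pos_of_mul_pos_right (hN.trans_le hp) hK.le
  have hlarge : 19 * μ * N < |p * w| := by
    rw [abs_mul, abs_of_pos hp₀]
    calc 19 * μ * N ≤ 19 * μ * (K * p) := by gcongr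
      _ = p * (19 * K * μ) := by ring
      _ < p * |w| := mul_lt_mul_of_pos_left (hsep hne) hp₀
  have htriangle := abs_sub (t + p * w) t
  rw [add_sub_cancel_left] at htriangle
  linarith [le_mul_of_one_le_left hN.le hμ]

lemma eq_zero_of_abs_mul_add_mul_lt {u v μ κ M W ρ : ℝ} (hW : 0 < W) (hμ : W ≤ μ) (hM : 0 < M)
    (hρ : M ≤ 2 * ρ * W ^ 2) (hform : |2 * μ * u + κ * v| < M) (hsep : v ≠ 0 → W < |v|)
    (hslope : v ≠ 0 → ρ < |κ / (2 * μ) + u / v|) : v = 0 := by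
  by_contra hne
  have hμ₀ : 0 < μ := hW.trans_le hμ
  have hρ₀ : 0 < ρ := by linarith [pos_of_mul_pos_left (hM.trans_le hρ) (sq_nonneg W)]
  have hfactor : 2 * μ * u + κ * v = 2 * μ * v * (κ / (2 * μ) + u / v) := by
    field_simp
    ring
  rw [hfactor, abs_mul, abs_mul, abs_of_pos (by positivity : 0 < 2 * μ)] at hform
  have hlarge : 2 * W * W * ρ ≤ 2 * μ * |v| * |κ / (2 * μ) + u / v| := by
    gcongr
    exacts [(hsep hne).le, (hslope hne).le]
  linarith

/-- The separations of `w`, `v` and `u` are used one after the other. -/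
lemma eq_zero_of_abs_linear_lt {u v w μ κ p N K W ρ : ℝ} (hW : 1 ≤ W) (hμ : W ≤ μ) (hN : 0 < N)
    (hκ : |κ| ≤ 3 * μ) (hK : 0 < K) (hp : N ≤ K * p) (hρ : 9 * N ≤ 2 * ρ * W ^ 2)
    (hu : |u| ≤ 2 * N) (hv : |v| ≤ 2 * N) (hform : |2 * μ * u + κ * v + p * w| < 9 * N)
    (hu₀ : u ≠ 0 → 5 * N / μ < |u|) (hv₀ : v ≠ 0 → W < |v|) (hw₀ : w ≠ 0 → 19 * K * μ < |w|)
    (hslope : v ≠ 0 → ρ < |κ / (2 * μ) + u / v|) : u = 0 ∧ v = 0 ∧ w = 0 := by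
  have hμ₀ : 0 < μ := by linarith
  have hbound : |2 * μ * u + κ * v| ≤ 10 * μ * N := by
    calc |2 * μ * u + κ * v| ≤ |2 * μ * u| + |κ * v| := abs_add_le _ _
      _ = 2 * μ * |u| + |κ| * |v| := by
          rw [abs_mul (2 * μ), abs_mul κ, abs_of_pos (by positivity : 0 < 2 * μ)]
      _ ≤ 2 * μ * (2 * N) + 3 * μ * (2 * N) := by gcongr
      _ = 10 * μ * N := by ring
  have hw := eq_zero_of_abs_add_mul_lt (hW.trans hμ) hN hK hp hbound hform hw₀
  rw [hw, mul_zero, add_zero] at hform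
  have hv := eq_zero_of_abs_mul_add_mul_lt (by linarith) hμ (by positivity) hρ hform hv₀ hslope
  rw [hv, mul_zero, add_zero] at hform
  refine ⟨by_contra fun hne => ?_, hv, hw⟩
  have hlarge := hu₀ hne
  rw [div_lt_iff₀ hμ₀] at hlarge
  rw [abs_mul, abs_of_pos (by positivity : 0 < 2 * μ)] at hform
  linarith

namespace SmallDilateSums

variable {s N K W ρ q : ℝ} {p₀ : ℤ} {R : Finset ℤ}

lemma rpow_le_of_card_mul_card_mul_card_le (S : SmallDilateSums s N K p₀ R) {X Y Z : Finset ℤ}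
    {μ : ℝ} (hW : 0 ≤ W) (hμ : 0 < μ) (hX : #R ≤ K * (2 * (5 * N / μ)) ^ s * #X)
    (hY : #R ≤ K * (2 * W) ^ s * #Y) (hZ : #R ≤ K * (2 * (19 * K * μ)) ^ s * #Z)
    (hXYZ : #X * (#Y * #Z) ≤ K ^ 51 * N ^ s) : N ^ s ≤ K ^ 61 * W ^ s := by
  have hK := S.pos
  have hK₁₀ := S.ten_le
  have hN := rpow_pos_of_pos S.scale_pos s
  have hle {a b : ℝ} (ha : 1 ≤ a) (hb : 0 ≤ b) := mul_rpow_le_mul_rpow S.exponent_lt_one.le ha hb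
  have hX' : (2 * (5 * N / μ)) ^ s ≤ 10 * (N ^ s / μ ^ s) := by
    rw [show 2 * (5 * N / μ) = 10 * (N / μ) by ring, ← div_rpow S.scale_pos.le hμ.le]
    exact hle (by norm_num) (div_nonneg S.scale_pos.le hμ.le)
  have hY' : (2 * W) ^ s ≤ 2 * W ^ s := hle (by norm_num) hW
  have hZ' : (2 * (19 * K * μ)) ^ s ≤ 38 * K * μ ^ s := by
    rw [show 2 * (19 * K * μ) = 38 * K * μ by ring]
    exact hle (by linarith) hμ.le
  have hcube : (N ^ s) ^ 2 * N ^ s ≤ (N ^ s) ^ 2 * (K ^ 61 * W ^ s) := by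
    calc (N ^ s) ^ 2 * N ^ s = N ^ s * (N ^ s * N ^ s) := by ring
      _ ≤ K * #R * ((K * #R) * (K * #R)) := by gcongr <;> exact S.le_card
      _ = K ^ 3 * (#R * (#R * #R)) := by ring
      _ ≤ K ^ 3 * (K * (10 * (N ^ s / μ ^ s)) * #X *
            ((K * (2 * W ^ s) * #Y) * (K * (38 * K * μ ^ s) * #Z))) := by
          gcongr
          exacts [hX.trans (by gcongr), hY.trans (by gcongr), hZ.trans (by gcongr)]
      _ = 760 * K ^ 7 * N ^ s * W ^ s * (#X * (#Y * #Z)) := by field_simp; ring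
      _ ≤ K ^ 3 * K ^ 7 * N ^ s * W ^ s * (K ^ 51 * N ^ s) := by
          gcongr
          linarith [pow_le_pow_left₀ (by norm_num) hK₁₀ 3]
      _ = (N ^ s) ^ 2 * (K ^ 61 * W ^ s) := by ring
  exact le_of_mul_le_mul_left hcube (by positivity)

/-- The integer form of `2 (c - d) x + ((a - b) + β (c - d)) y + p₀ z`, with every product replaced
by its cell. -/
noncomputable def cellForm (N : ℝ) (p₀ a b c d β : ℤ) (v : ℤ × ℤ × ℤ) : ℤ :=
  2 * (cell N (c * v.1) - cell N (d * v.1)) +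
    (cell N (a * v.2.1) - cell N (b * v.2.1)) +
    β * (cell N (c * v.2.1) - cell N (d * v.2.1)) + cell N (p₀ * v.2.2)

lemma cellForm_mem_sumDiff {T : Finset ℤ} {a b c d β x y z : ℤ} (ha : a ∈ T) (hb : b ∈ T)
    (hc : c ∈ T) (hd : d ∈ T) (hp : p₀ ∈ T) (hβ : β = 0 ∨ β = 1) (hx : x ∈ R) (hy : y ∈ R)
    (hz : z ∈ R) : cellForm N p₀ a b c d β (x, y, z) ∈ sumDiff (dilateHull N R T) 5 := by
  have h₀ := zero_mem_dilateHull N R T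
  have hcx := nsmul_mem_sumDiff (cell_mul_sub_mem_sumDiff N hc hd hx) 2
  have hay := cell_mul_sub_mem_sumDiff N ha hb hy
  have hcy : β * (cell N (c * y) - cell N (d * y)) ∈ sumDiff (dilateHull N R T) 1 := by
    rcases hβ with rfl | rfl
    · simpa only [zero_mul, sub_self] using sub_mem_sumDiff_one h₀ h₀
    · simpa only [one_mul] using cell_mul_sub_mem_sumDiff N hc hd hy
  have hpz := sub_mem_sumDiff_one (cell_mem_dilateHull N hp hz) h₀
  rw [sub_zero] at hpz
  have hsum := add_mem_sumDiff (add_mem_sumDiff (add_mem_sumDiff hcx hay) hcy) hpz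
  rwa [nsmul_eq_mul, Nat.cast_ofNat] at hsum

lemma abs_linear_lt_of_cellForm_eq {a b c d β x y z x' y' z' : ℤ} (hN : 0 < N)
    (hβ : β = 0 ∨ β = 1)
    (h : cellForm N p₀ a b c d β (x, y, z) = cellForm N p₀ a b c d β (x', y', z')) :
    |2 * ((c : ℝ) - d) * (x - x') + ((a - b) + β * (c - d)) * (y - y') + p₀ * (z - z')| <
      9 * N := by
  have hcx := abs_lt.1 (abs_sub_mul_sub_mul_cell_lt hN c d x x')
  have hay := abs_lt.1 (abs_sub_mul_sub_mul_cell_lt hN a b y y')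
  have hcy := abs_lt.1 (abs_sub_mul_sub_mul_cell_lt hN c d y y')
  have hpz := abs_lt.1 (abs_mul_sub_mul_cell_lt hN p₀ z z')
  have hzero := congrArg (fun w : ℤ => N * (w : ℝ)) h
  simp only [cellForm] at hzero
  push_cast at hzero hcx hay hcy hpz
  rw [abs_lt]
  rcases hβ with rfl | rfl <;> push_cast at hzero ⊢ <;> constructor <;> linarith

lemma injOn_cellForm (S : SmallDilateSums s N K p₀ R) {X Y Z : Finset ℤ} {a b c d β : ℤ}
    (hXR : X ⊆ R) (hYR : Y ⊆ R)
    (hX : (X : Set ℤ).Pairwise fun x x' => 5 * N / (c - d) < |(x : ℝ) - x'|)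
    (hY : (Y : Set ℤ).Pairwise fun y y' => W < |(y : ℝ) - y'|)
    (hZ : (Z : Set ℤ).Pairwise fun z z' => 19 * K * (c - d) < |(z : ℝ) - z'|)
    (hW : 1 ≤ W) (hρ : 9 * N ≤ 2 * ρ * W ^ 2) (hcd : W ≤ (c : ℝ) - d)
    (hab : |((a : ℝ) - b) / (c - d)| ≤ 2) (hβ : β = 0 ∨ β = 1)
    (hgap : ∀ q ∈ slopes R W, ρ < |(((a : ℝ) - b) / (c - d) + β) / 2 - q|) :
    Set.InjOn (cellForm N p₀ a b c d β) (X ×ˢ Y ×ˢ Z : Finset (ℤ × ℤ × ℤ)) := by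
  rintro ⟨x, y, z⟩ hv ⟨x', y', z'⟩ hv' h
  simp only [coe_product, Set.mem_prod, mem_coe] at hv hv'
  obtain ⟨⟨hx, hy, hz⟩, hx', hy', hz'⟩ := hv, hv'
  have ne_of_sub {m n : ℤ} (h : (m : ℝ) - n ≠ 0) : m ≠ n := fun h' => h (by rw [h', sub_self])
  have hform := abs_linear_lt_of_cellForm_eq S.scale_pos hβ h
  have hμ : (0 : ℝ) < c - d := by linarith
  have hκ : |(a - b) + β * (c - d : ℝ)| ≤ 3 * (c - d) := by
    rw [abs_div, abs_of_pos hμ, div_le_iff₀ hμ, abs_le] at hab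
    rw [abs_le]
    rcases hβ with rfl | rfl <;> push_cast <;> constructor <;> linarith
  have hslope : (y : ℝ) - y' ≠ 0 →
      ρ < |((a - b) + β * (c - d : ℝ)) / (2 * (c - d)) + (x - x') / (y - y')| := fun hne => by
    have h := hgap _ (div_mem_slopes (hXR hx') (hXR hx) (hYR hy) (hYR hy')
      (hY hy hy' (ne_of_sub hne)).le)
    convert h using 2
    rw [← neg_sub (x : ℝ), neg_div, sub_neg_eq_add]
    field_simp
  obtain ⟨hxx', hyy', hzz'⟩ := eq_zero_of_abs_linear_lt hW hcd S.scale_pos hκ S.pos S.scale_le hρ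
    (S.abs_sub_le (hXR hx) (hXR hx')) (S.abs_sub_le (hYR hy) (hYR hy')) hform
    (fun h => hX hx hx' (ne_of_sub h)) (fun h => hY hy hy' (ne_of_sub h))
    (fun h => hZ hz hz' (ne_of_sub h)) hslope
  simp only [sub_eq_zero, Int.cast_inj] at hxx' hyy' hzz'
  rw [hxx', hyy', hzz']

/-- A dyadic child of a slope that is far from all slopes yields a `cellForm` that is injective on
separated sets, hence too many values. -/
theorem rpow_le_of_slope_gap (S : SmallDilateSums s N K p₀ R) (hW : 1 ≤ W)
    (hρ : 9 * N ≤ 2 * ρ * W ^ 2) (hq : q ∈ slopes R W) (hq₂ : |q| ≤ 2) {β : ℤ}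
    (hβ : β = 0 ∨ β = 1) (hgap : ∀ q' ∈ slopes R W, ρ < |(q + β) / 2 - q'|) :
    N ^ s ≤ K ^ 61 * W ^ s := by
  obtain ⟨a, ha, b, hb, c, hc, d, hd, hcd, rfl⟩ := hq
  have hN := S.scale_pos
  have hK := S.ten_le
  set μ : ℝ := c - d
  have hμ : 0 < μ := by linarith
  have hμN : μ ≤ 2 * N := (le_abs_self _).trans (S.abs_sub_le hc hd)
  obtain ⟨Z, hZR, hZ, hRZ⟩ := S.nonConcentrated.exists_separated_subset
    (d := 19 * K * μ) (by nlinarith)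
  obtain ⟨Y, hYR, hY, hRY⟩ := S.nonConcentrated.exists_separated_subset (d := W) (by linarith)
  obtain ⟨X, hXR, hX, hRX⟩ := S.nonConcentrated.exists_separated_subset (d := 5 * N / μ) (by
    rw [← mul_div_assoc, le_div_iff₀ hμ]
    linarith)
  refine S.rpow_le_of_card_mul_card_mul_card_le (by linarith) hμ hRX hRY hRZ ?_
  set T : Finset ℤ := {p₀, a, b, c, d}
  have hT : T ⊆ insert p₀ R := insert_subset_insert p₀ (by simp [insert_subset_iff, *])
  refine le_trans ?_ (S.card_sumDiff_dilateHull_le hT card_le_five)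
  rw [← Nat.cast_mul, ← Nat.cast_mul, ← card_product, ← card_product, Nat.cast_le]
  refine card_le_card_of_injOn (cellForm N p₀ a b c d β) ?_ ?_
  · rintro ⟨x, y, z⟩ hv
    simp only [coe_product, Set.mem_prod, mem_coe] at hv
    exact cellForm_mem_sumDiff (by simp [T]) (by simp [T]) (by simp [T]) (by simp [T])
      (by simp [T]) hβ (hXR hv.1) (hYR hv.2.1) (hZR hv.2.2)
  · exact S.injOn_cellForm hXR hYR hX hY hZ hW hρ hcd hq₂ hβ hgap

end SmallDilateSums

end Gap

section Strips

variable {s K : ℝ} {R : Finset ℤ}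

/-- The pairs of points of `R × R` whose difference lies within `w` of the line `x + l y = 0`. -/
noncomputable def strip (R : Finset ℤ) (l w : ℝ) : Finset ((ℤ × ℤ) × (ℤ × ℤ)) :=
  ((R ×ˢ R) ×ˢ (R ×ˢ R)).filter fun e => |((e.1.1 : ℝ) - e.2.1) + l * (e.1.2 - e.2.2)| ≤ w

lemma card_filter_strip_le (hR : NonConcentrated s K R) (hK : 0 ≤ K) {l w h : ℝ}
    (hw : 1 ≤ 2 * w) (hh : 1 ≤ 2 * h) :
    #((strip R l w).filter fun e => |(e.1.2 : ℝ) - e.2.2| ≤ h) ≤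
      K * (2 * w) ^ s * (K * (2 * h) ^ s * (#R : ℝ) ^ 2) := by
  set P := (R ×ˢ R).filter fun v => |(v.1 : ℝ) - v.2| ≤ h
  have hP : (#P : ℝ) ≤ K * (2 * h) ^ s * #R := by
    refine card_le_mul_card_of_card_fiber_le (f := Prod.snd)
      (fun v hv => (mem_product.1 (mem_filter.1 hv).1).2) fun y _ => ?_
    refine le_trans (Nat.cast_le.2 (card_le_card_of_injOn Prod.fst (fun v hv => ?_)
      fun v hv v' hv' hfst => ?_)) (hR.card_filter_abs_sub_le hh y)
    · obtain ⟨hvP, rfl⟩ := mem_filter.1 hv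
      obtain ⟨hvR, hclose⟩ := mem_filter.1 hvP
      exact mem_filter.2 ⟨(mem_product.1 hvR).1, hclose⟩
    · exact Prod.ext hfst ((mem_filter.1 hv).2.trans (mem_filter.1 hv').2.symm)
  have hfiber : (#((strip R l w).filter fun e => |(e.1.2 : ℝ) - e.2.2| ≤ h) : ℝ) ≤
      K * (2 * w) ^ s * #(P ×ˢ R) := by
    refine card_le_mul_card_of_card_fiber_le (f := fun e => ((e.1.2, e.2.2), e.2.1))
      (fun e he => ?_) fun v _ => ?_
    · simp only [strip, mem_filter, mem_product] at he
      simp only [P, mem_product, mem_filter]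
      tauto
    · refine le_trans (Nat.cast_le.2 (card_le_card_of_injOn (fun e => e.1.1) (fun e he => ?_)
        fun e he e' he' hfst => ?_))
        (hR.card_filter_abs_sub_le hw ((v.2 : ℝ) - l * ((v.1.1 : ℝ) - v.1.2)))
      · simp only [strip, coe_filter, mem_filter, mem_product, Set.mem_ofPred_eq] at he
        obtain ⟨⟨⟨⟨⟨hx, -⟩, -⟩, hstrip⟩, -⟩, rfl⟩ := he
        refine mem_filter.2 ⟨hx, ?_⟩
        convert hstrip using 2
        ring
      · have heq := (mem_filter.1 he).2.trans (mem_filter.1 he').2.symm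
        simp only [Prod.ext_iff] at heq hfst ⊢
        tauto
  refine hfiber.trans ?_
  rw [card_product, Nat.cast_mul]
  calc K * (2 * w) ^ s * (#P * #R) ≤ K * (2 * w) ^ s * (K * (2 * h) ^ s * #R * #R) := by
        gcongr
    _ = K * (2 * w) ^ s * (K * (2 * h) ^ s * (#R : ℝ) ^ 2) := by ring

variable {N ρ t : ℝ} {l : ℕ → ℝ} {n : ℕ}

lemma card_filter_abs_add_mul_le (hN : 0 < N) (hρ : 0 < ρ) (ht : 0 < t) (ht₁ : t ≤ 1)
    (hl : ∀ k < n, |l k - k * (8 * ρ)| ≤ 3 * ρ) {x y : ℝ} (hy : t * N < |y|) :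
    #((range n).filter fun k => |x + l k * y| ≤ ρ * N) ≤ 2 / t := by
  set I := (range n).filter fun k => |x + l k * y| ≤ ρ * N
  have hdist : ∀ k ∈ I, ∀ j ∈ I, (k : ℝ) - j ≤ 1 / t := fun k hk j hj => by
    obtain ⟨hkn, hk⟩ := mem_filter.1 hk
    obtain ⟨hjn, hj⟩ := mem_filter.1 hj
    have hstrip : |(l k - l j) * y| ≤ 2 * ρ * N := by
      rw [abs_le] at hk hj ⊢
      constructor <;> linarith
    have hslope : |l k - l j| ≤ 2 * ρ / t := by
      rw [le_div_iff₀ ht]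
      refine le_of_mul_le_mul_right ?_ hN
      calc |l k - l j| * t * N = |l k - l j| * (t * N) := by ring
        _ ≤ |(l k - l j) * y| := by rw [abs_mul]; gcongr
        _ ≤ 2 * ρ * N := hstrip
    have hkl := (abs_le.1 (hl k (mem_range.1 hkn))).1
    have hjl := (abs_le.1 (hl j (mem_range.1 hjn))).2
    refine le_of_mul_le_mul_right ?_ (by positivity : 0 < 8 * ρ)
    calc ((k : ℝ) - j) * (8 * ρ) ≤ 2 * ρ / t + 6 * ρ := by linarith [(abs_le.1 hslope).2]
      _ ≤ 2 * ρ / t + 6 * ρ * (1 / t) := by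
          linarith [le_mul_of_one_le_right (by positivity : 0 ≤ 6 * ρ) ((one_le_div ht).2 ht₁)]
      _ = 1 / t * (8 * ρ) := by ring
  have hcard := card_le_add_one_of_forall_sub_le (I := I.map Nat.castEmbedding)
    (by positivity : 0 ≤ 1 / t) (by simpa only [forall_mem_map, Nat.castEmbedding_apply,
      Int.cast_natCast] using hdist)
  rw [card_map] at hcard
  calc (#I : ℝ) ≤ 1 / t + 1 := hcard
    _ ≤ 1 / t + 1 / t := by gcongr; exact (one_le_div ht).2 ht₁
    _ = 2 / t := by ring

/-- Pairs whose second coordinates differ by more than `t N` lie in few strips, because the slopes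
`l k` are separated; the other pairs are rare by non-concentration. -/
lemma sum_card_strip_le (hR : NonConcentrated s K R) (hK : 0 ≤ K) (hN : 0 < N) (hρ : 0 < ρ)
    (ht : 0 < t) (ht₁ : t ≤ 1) (hρN : 1 ≤ 2 * (ρ * N)) (htN : 1 ≤ 2 * (t * N))
    (hl : ∀ k < n, |l k - k * (8 * ρ)| ≤ 3 * ρ) :
    ∑ k ∈ range n, (#(strip R (l k) (ρ * N)) : ℝ) ≤
      n * (K * (2 * (ρ * N)) ^ s * (K * (2 * (t * N)) ^ s * (#R : ℝ) ^ 2)) +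
        (#R : ℝ) ^ 4 * (2 / t) := by
  set V := (R ×ˢ R) ×ˢ (R ×ˢ R)
  set near : (ℤ × ℤ) × (ℤ × ℤ) → Prop := fun e => |(e.1.2 : ℝ) - e.2.2| ≤ t * N
  have hfar : ∑ k ∈ range n, (#((strip R (l k) (ρ * N)).filter fun e => ¬ near e) : ℝ) ≤
      (#R : ℝ) ^ 4 * (2 / t) := by
    have hswap := sum_card_bipartiteAbove_eq_sum_card_bipartiteBelow (s := range n)
      (t := V.filter fun e => ¬ near e) fun k e =>
        |((e.1.1 : ℝ) - e.2.1) + l k * (e.1.2 - e.2.2)| ≤ ρ * N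
    simp only [bipartiteAbove, bipartiteBelow, filter_comm (s := V) (p := fun e => ¬ near e)]
      at hswap
    calc ∑ k ∈ range n, (#((strip R (l k) (ρ * N)).filter fun e => ¬ near e) : ℝ)
        = ∑ e ∈ V.filter fun e => ¬ near e, (#((range n).filter fun k =>
            |((e.1.1 : ℝ) - e.2.1) + l k * (e.1.2 - e.2.2)| ≤ ρ * N) : ℝ) := by
          rw [← Nat.cast_sum, ← Nat.cast_sum, ← hswap]
          rfl
      _ ≤ #(V.filter fun e => ¬ near e) • (2 / t) := sum_le_card_nsmul _ _ _ fun e he =>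
          card_filter_abs_add_mul_le hN hρ ht ht₁ hl (not_le.1 (mem_filter.1 he).2)
      _ ≤ #V • (2 / t) := by gcongr; exact filter_subset _ _
      _ = (#R : ℝ) ^ 4 * (2 / t) := by
          rw [nsmul_eq_mul, card_product, card_product]
          push_cast
          ring
  have hnear : ∑ k ∈ range n, (#((strip R (l k) (ρ * N)).filter near) : ℝ) ≤
      n * (K * (2 * (ρ * N)) ^ s * (K * (2 * (t * N)) ^ s * (#R : ℝ) ^ 2)) := by
    have h := sum_le_card_nsmul (range n) _ _ fun k _ =>
      card_filter_strip_le (l := l k) hR hK hρN htN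
    rwa [nsmul_eq_mul, card_range] at h
  refine le_of_eq_of_le ?_ (add_le_add hnear hfar)
  rw [← sum_add_distrib]
  exact sum_congr rfl fun k _ => mod_cast (card_filter_add_card_filter_not near).symm

end Strips

section DenseSlopes

lemma exists_abs_sub_le_of_dyadic {Q : Set ℝ} {ρ : ℝ} (hρ : 0 ≤ ρ) (hρ₂ : ρ ≤ 1 / 2)
    (h0 : (0 : ℝ) ∈ Q)
    (hQ : ∀ q ∈ Q, |q| ≤ 2 → ∀ β : ℤ, β = 0 ∨ β = 1 → ∃ q' ∈ Q, |(q + β) / 2 - q'| ≤ ρ) (n : ℕ) :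
    ∀ x : ℝ, 0 ≤ x → x ≤ 1 → ∃ q ∈ Q, |q| ≤ 2 ∧ |q - x| ≤ 2 * ρ + (1 / 2) ^ n := by
  induction n with
  | zero =>
    intro x hx₀ hx₁
    refine ⟨0, h0, by norm_num, ?_⟩
    rw [zero_sub, abs_neg, abs_of_nonneg hx₀, pow_zero]
    linarith
  | succ n ih =>
    intro x hx₀ hx₁
    obtain ⟨β, hβ, hβx, hxβ⟩ : ∃ β : ℤ, (β = 0 ∨ β = 1) ∧ 0 ≤ 2 * x - β ∧ 2 * x - β ≤ 1 := by
      rcases le_total x (1 / 2) with hx | hx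
      · exact ⟨0, .inl rfl, by push_cast; linarith, by push_cast; linarith⟩
      · exact ⟨1, .inr rfl, by push_cast; linarith, by push_cast; linarith⟩
    obtain ⟨q, hq, hq₂, hqx⟩ := ih (2 * x - β) hβx hxβ
    obtain ⟨q', hq', hqq'⟩ := hQ q hq hq₂ β hβ
    rw [abs_le] at hq₂ hqx hqq'
    refine ⟨q', hq', abs_le.2 ?_, abs_le.2 ?_⟩
    · rcases hβ with rfl | rfl <;> push_cast at hqq' <;> constructor <;> linarith
    · rw [pow_succ]
      constructor <;> linarith

lemma abs_add_div_mul_le {x y μ κ M W w : ℝ} (hW : 0 < W) (hμ : W ≤ μ) (hw : M ≤ w * W)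
    (hM : 0 ≤ M) (h : |μ * x + κ * y| ≤ M) : |x + κ / μ * y| ≤ w := by
  have hμ₀ : 0 < μ := hW.trans_le hμ
  have hw₀ : 0 ≤ w := nonneg_of_mul_nonneg_left (hM.trans hw) hW
  have hfactor : μ * x + κ * y = μ * (x + κ / μ * y) := by field_simp
  rw [hfactor, abs_mul, abs_of_pos hμ₀] at h
  refine le_of_mul_le_mul_left ?_ hμ₀
  linarith [mul_le_mul_of_nonneg_left hμ hw₀]

lemma exists_separated_of_dense {Q : Set ℝ} {ρ : ℝ} (hρ : 0 < ρ)
    (hQ : ∀ x : ℝ, 0 ≤ x → x ≤ 1 → ∃ q ∈ Q, |q - x| ≤ 3 * ρ) :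
    ∃ (n : ℕ) (l : ℕ → ℝ), 1 ≤ n * (8 * ρ) ∧
      ∀ k < n, l k ∈ Q ∧ |l k - k * (8 * ρ)| ≤ 3 * ρ := by
  set n := ⌊1 / (8 * ρ)⌋₊ + 1
  have hn : 1 ≤ n * (8 * ρ) := by
    rw [← div_le_iff₀ (by positivity)]
    exact_mod_cast (Nat.lt_floor_add_one (1 / (8 * ρ))).le
  have hexists : ∀ k : ℕ, ∃ q : ℝ, k < n → q ∈ Q ∧ |q - k * (8 * ρ)| ≤ 3 * ρ := fun k => by
    by_cases hk : k < n
    · have hk₁ : (k : ℝ) * (8 * ρ) ≤ 1 := by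
        rw [← le_div_iff₀ (by positivity), ← Nat.le_floor_iff (by positivity)]
        exact Nat.lt_succ_iff.1 hk
      obtain ⟨q, hq, hqk⟩ := hQ _ (by positivity) hk₁
      exact ⟨q, fun _ => ⟨hq, hqk⟩⟩
    · exact ⟨0, fun h => absurd h hk⟩
  choose l hl using hexists
  exact ⟨n, l, hn, hl⟩

lemma rpow_mul_rpow_mul_rpow_le_one {s N u : ℝ} (hN : 0 < N) (hu : 1 ≤ u) (hs : 0 ≤ s) :
    N ^ s * (1 / u ^ 9 * (u ^ 3 / N)) ^ s * u ^ s ≤ 1 := by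
  have hu₀ : 0 < u := one_pos.trans_le hu
  rw [← mul_rpow hN.le (by positivity), ← mul_rpow (by positivity) hu₀.le]
  refine rpow_le_one (by positivity) ?_ hs
  rw [show N * (1 / u ^ 9 * (u ^ 3 / N)) * u = 1 / u ^ 5 by field_simp]
  exact div_le_one_of_le₀ (one_le_pow₀ hu) (by positivity)

lemma rpow_mul_div_mul_rpow_le_one {s N u : ℝ} (hN : 0 < N) (hu : 1 ≤ u) (hs : s ≤ 1)
    (huN : N ^ s * u ^ 18 = N) : N ^ s * (u ^ 3 / N / (1 / u ^ 9)) * u ^ s ≤ 1 := by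
  have hus : u ^ s ≤ u ^ 6 := by
    rw [← rpow_natCast]
    exact rpow_le_rpow_of_exponent_le hu (hs.trans (by norm_num))
  calc N ^ s * (u ^ 3 / N / (1 / u ^ 9)) * u ^ s
      ≤ N ^ s * (u ^ 3 / N / (1 / u ^ 9)) * u ^ 6 := by gcongr
    _ = N ^ s * u ^ 18 / N := by field_simp
    _ = 1 := by rw [huN, div_self hN.ne']

namespace SmallDilateSums

variable {s N K W ρ t l w : ℝ} {p₀ : ℤ} {R : Finset ℤ}

/-- The collisions of `(x, y) ↦ (c - d) x + (a - b) y`, computed on cells, lie in a strip of slope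
`l = (a - b) / (c - d)`. -/
lemma card_pow_four_le_card_strip (S : SmallDilateSums s N K p₀ R) (hl : l ∈ slopes R W)
    (hW : 0 < W) (hw : 4 * N ≤ w * W) :
    (#R : ℝ) ^ 4 ≤ K ^ 51 * N ^ s * #(strip R l w) := by
  obtain ⟨a, ha, b, hb, c, hc, d, hd, hcd, rfl⟩ := hl
  have hN := S.scale_pos
  set f : ℤ × ℤ → ℤ := fun v =>
    (cell N (c * v.1) - cell N (d * v.1)) + (cell N (a * v.2) - cell N (b * v.2))
  set T : Finset ℤ := {a, b, c, d}
  have hT : T ⊆ insert p₀ R :=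
    Subset.trans (by simp [T, insert_subset_iff, *]) (subset_insert p₀ R)
  have himage : (R ×ˢ R).image f ⊆ sumDiff (dilateHull N R T) 5 := fun v hv => by
    obtain ⟨⟨x, y⟩, hxy, rfl⟩ := mem_image.1 hv
    obtain ⟨hx, hy⟩ := mem_product.1 hxy
    have hsum := add_mem_sumDiff
      (cell_mul_sub_mem_sumDiff (T := T) N (a := c) (b := d) (by simp [T]) (by simp [T]) hx)
      (cell_mul_sub_mem_sumDiff (T := T) N (a := a) (b := b) (by simp [T]) (by simp [T]) hy)
    exact sumDiff_subset_sumDiff (zero_mem_dilateHull N R T) (by norm_num) hsum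
  have hcollisions : {e ∈ (R ×ˢ R) ×ˢ (R ×ˢ R) | f e.1 = f e.2} ⊆
      strip R (((a : ℝ) - b) / (c - d)) w := by
    refine monotone_filter_right _ fun e _ he => ?_
    have hx := abs_lt.1 (abs_sub_mul_sub_mul_cell_lt hN c d e.1.1 e.2.1)
    have hy := abs_lt.1 (abs_sub_mul_sub_mul_cell_lt hN a b e.1.2 e.2.2)
    have hzero := congrArg (fun m : ℤ => N * (m : ℝ)) he
    simp only [f] at hzero
    push_cast at hx hy hzero
    exact abs_add_div_mul_le hW hcd hw (by linarith) (abs_le.2 ⟨by linarith, by linarith⟩)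
  calc (#R : ℝ) ^ 4 = ((#(R ×ˢ R) : ℕ) : ℝ) ^ 2 := by rw [card_product, Nat.cast_mul]; ring
    _ ≤ (#((R ×ˢ R).image f) : ℝ) * #{e ∈ (R ×ˢ R) ×ˢ (R ×ˢ R) | f e.1 = f e.2} :=
        mod_cast sq_card_le_card_image_mul_card_collisions _ f
    _ ≤ K ^ 51 * N ^ s * #(strip R (((a : ℝ) - b) / (c - d)) w) := by
        refine mul_le_mul ?_ (Nat.cast_le.2 (card_le_card hcollisions)) (Nat.cast_nonneg _)
          ((Nat.cast_nonneg _).trans (S.card_sumDiff_dilateHull_le hT (by grind)))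
        exact le_trans (mod_cast card_le_card himage)
          (S.card_sumDiff_dilateHull_le hT (by grind))

lemma card_pow_four_mul_le_sum_card_strip (S : SmallDilateSums s N K p₀ R) {l : ℕ → ℝ} {n : ℕ}
    (hl : ∀ k < n, l k ∈ slopes R W) (hW : 0 < W) (hw : 4 * N ≤ w * W) :
    n * (#R : ℝ) ^ 4 ≤ K ^ 51 * N ^ s * ∑ k ∈ range n, (#(strip R (l k) w) : ℝ) := by
  rw [mul_sum]
  have h := card_nsmul_le_sum (range n) _ _ fun k hk =>
    S.card_pow_four_le_card_strip (hl k (Finset.mem_range.1 hk)) hW hw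
  rwa [nsmul_eq_mul, card_range] at h

lemma rpow_mul_rpow_le (S : SmallDilateSums s N K p₀ R) (hρ : 0 ≤ ρ) (ht : 0 ≤ t) :
    (2 * (ρ * N)) ^ s * (2 * (t * N)) ^ s ≤ 4 * (t * ρ) ^ s * (K * #R) ^ 2 := by
  have hN := S.scale_pos
  calc (2 * (ρ * N)) ^ s * (2 * (t * N)) ^ s = (4 * ((t * ρ) * (N * N))) ^ s := by
        rw [← mul_rpow (by positivity) (by positivity)]
        ring_nf
    _ ≤ 4 * ((t * ρ) * (N * N)) ^ s :=
        mul_rpow_le_mul_rpow S.exponent_lt_one.le (by norm_num) (by positivity)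
    _ = 4 * (t * ρ) ^ s * (N ^ s) ^ 2 := by
        rw [mul_rpow (by positivity) (by positivity), mul_rpow hN.le hN.le]
        ring
    _ ≤ 4 * (t * ρ) ^ s * (K * #R) ^ 2 := by gcongr; exact S.le_card

/-- If the slopes are `3ρ`-dense in `[0, 1]`, then the strips of about `1 / ρ` separated slopes are
too large in total. -/
theorem one_le_of_slopes_dense (S : SmallDilateSums s N K p₀ R) (hW : 0 < W) (hρ : 0 < ρ)
    (ht : 0 < t) (ht₁ : t ≤ 1) (hρW : 4 * N ≤ ρ * N * W) (hρN : 1 ≤ 2 * (ρ * N))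
    (htN : 1 ≤ 2 * (t * N))
    (hdense : ∀ x : ℝ, 0 ≤ x → x ≤ 1 → ∃ q ∈ slopes R W, |q - x| ≤ 3 * ρ) :
    1 ≤ K ^ 51 * N ^ s * (4 * K ^ 4 * (t * ρ) ^ s + 16 * (ρ / t)) := by
  obtain ⟨n, l, hn, hl⟩ := exists_separated_of_dense hρ hdense
  have hlower := S.card_pow_four_mul_le_sum_card_strip (fun k hk => (hl k hk).1) hW hρW
  have hupper := sum_card_strip_le S.nonConcentrated S.pos.le S.scale_pos hρ ht ht₁ hρN htN
    fun k hk => (hl k hk).2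
  have hK := S.pos
  have hN := S.scale_pos
  have hR := S.card_pos
  have hnear := S.rpow_mul_rpow_le hρ.le ht.le
  have hfar : 2 / t ≤ n * (16 * (ρ / t)) := by
    calc 2 / t = 2 / t * 1 := (mul_one _).symm
      _ ≤ 2 / t * (n * (8 * ρ)) := by gcongr
      _ = n * (16 * (ρ / t)) := by ring
  have hn₀ : 0 < (n : ℝ) := pos_of_mul_pos_left (one_pos.trans_le hn) (by positivity)
  refine le_of_mul_le_mul_left ?_ (by positivity : 0 < n * (#R : ℝ) ^ 4)
  rw [mul_one]
  calc (n : ℝ) * (#R : ℝ) ^ 4 ≤ K ^ 51 * N ^ s * _ := hlower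
    _ ≤ K ^ 51 * N ^ s * (n * (K ^ 2 * (4 * (t * ρ) ^ s * (K * #R) ^ 2) * (#R : ℝ) ^ 2) +
          (#R : ℝ) ^ 4 * (n * (16 * (ρ / t)))) := by
        refine mul_le_mul_of_nonneg_left (hupper.trans ?_) (by positivity)
        refine add_le_add (mul_le_mul_of_nonneg_left ?_ n.cast_nonneg) (by gcongr)
        calc K * (2 * (ρ * N)) ^ s * (K * (2 * (t * N)) ^ s * (#R : ℝ) ^ 2)
            = K ^ 2 * ((2 * (ρ * N)) ^ s * (2 * (t * N)) ^ s) * (#R : ℝ) ^ 2 := by ring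
          _ ≤ K ^ 2 * (4 * (t * ρ) ^ s * (K * #R) ^ 2) * (#R : ℝ) ^ 2 := by gcongr
    _ = n * (#R : ℝ) ^ 4 *
          (K ^ 51 * N ^ s * (4 * K ^ 4 * (t * ρ) ^ s + 16 * (ρ / t))) := by ring

lemma zero_mem_slopes (S : SmallDilateSums s N K p₀ R) (hW : 1 ≤ W)
    (hlt : K ^ 2 * W ^ s < N ^ s) : 0 ∈ slopes R W := by
  have hK := S.pos
  have hR : R.Nonempty := Finset.card_pos.1 (Nat.cast_pos.1 S.card_pos)
  have hmin := R.min'_mem hR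
  have hmax := R.max'_mem hR
  refine ⟨_, hmin, _, hmin, _, hmax, _, hmin, le_of_not_gt fun hdiam => hlt.not_ge ?_, by simp⟩
  have hfilter : (R.filter fun r : ℤ => (R.min' hR : ℝ) ≤ r ∧ r ≤ R.min' hR + W) = R :=
    filter_true_of_mem fun r hr => ⟨mod_cast R.min'_le r hr, by
      have hr' : (r : ℝ) ≤ R.max' hR := mod_cast R.le_max' r hr
      linarith⟩
  have hcard := S.nonConcentrated (R.min' hR) W hW
  rw [hfilter] at hcard
  calc N ^ s ≤ K * #R := S.le_card
    _ ≤ K * (K * W ^ s) := by gcongr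
    _ = K ^ 2 * W ^ s := by ring

lemma pow_le_scale (S : SmallDilateSums s N K p₀ R) {u : ℝ}
    (huN : N ^ s * u ^ 18 = N) : u ^ 18 ≤ N := by
  rw [← huN]
  exact le_mul_of_one_le_left (by positivity) (one_le_rpow S.one_le_scale S.exponent_pos.le)

lemma rpow_le_of_slopes_dense (S : SmallDilateSums s N K p₀ R) {u : ℝ} (hu : 2 ≤ u)
    (huN : N ^ s * u ^ 18 = N)
    (hdense : ∀ x : ℝ, 0 ≤ x → x ≤ 1 → ∃ q ∈ slopes R (N / u), |q - x| ≤ 3 * (u ^ 3 / N)) :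
    u ^ s ≤ K ^ 56 := by
  have hN := S.scale_pos
  have hK := S.ten_le
  have hu₁ : 1 ≤ u := by linarith
  have hu₀ : 0 < u := by linarith
  have hpow : u ^ 9 ≤ N :=
    (pow_le_pow_right₀ hu₁ (by norm_num)).trans (S.pow_le_scale huN)
  have hρW : 4 * N ≤ u ^ 3 / N * N * (N / u) := by
    rw [show u ^ 3 / N * N * (N / u) = u ^ 2 * N by field_simp]
    gcongr
    nlinarith
  have hρN : 1 ≤ u ^ 3 / N * N := by
    rw [div_mul_cancel₀ _ hN.ne']
    exact one_le_pow₀ hu₁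
  have htN : 1 ≤ 1 / u ^ 9 * N := by rwa [one_div_mul_eq_div, one_le_div (by positivity)]
  have hone := S.one_le_of_slopes_dense (div_pos hN hu₀) (by positivity)
    (by positivity) (div_le_one_of_le₀ (one_le_pow₀ hu₁) (by positivity))
    hρW (hρN.trans (le_mul_of_one_le_left (by positivity) one_le_two))
    (htN.trans (le_mul_of_one_le_left (by positivity) one_le_two)) hdense
  have hnear := rpow_mul_rpow_mul_rpow_le_one hN hu₁ S.exponent_pos.le
  have hfar := rpow_mul_div_mul_rpow_le_one hN hu₁ S.exponent_lt_one.le huN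
  calc u ^ s = 1 * u ^ s := (one_mul _).symm
    _ ≤ K ^ 51 * N ^ s * (4 * K ^ 4 * (1 / u ^ 9 * (u ^ 3 / N)) ^ s +
          16 * (u ^ 3 / N / (1 / u ^ 9))) * u ^ s := by gcongr
    _ = K ^ 51 * (4 * K ^ 4 * (N ^ s * (1 / u ^ 9 * (u ^ 3 / N)) ^ s * u ^ s) +
          16 * (N ^ s * (u ^ 3 / N / (1 / u ^ 9)) * u ^ s)) := by ring
    _ ≤ K ^ 51 * (4 * K ^ 4 * 1 + 16 * 1) := by gcongr
    _ ≤ K ^ 51 * (10 * K ^ 4) := by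
        gcongr
        nlinarith [pow_le_pow_left₀ (by norm_num) hK 4]
    _ ≤ K ^ 51 * (K * K ^ 4) := by gcongr
    _ = K ^ 56 := by ring

lemma exists_slope_abs_sub_le (S : SmallDilateSums s N K p₀ R) {u : ℝ} (hu : 5 ≤ u)
    (huN : N ^ s * u ^ 18 = N) (hlt : K ^ 61 < u ^ s) {x : ℝ} (hx₀ : 0 ≤ x) (hx₁ : x ≤ 1) :
    ∃ q ∈ slopes R (N / u), |q - x| ≤ 3 * (u ^ 3 / N) := by
  have hN := S.scale_pos
  have hK₁ : 1 ≤ K := by linarith [S.ten_le]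
  have hu₁ : 1 ≤ u := by linarith
  have hu₀ : 0 < u := by linarith
  have hpow : u ^ 4 ≤ N :=
    (pow_le_pow_right₀ hu₁ (by norm_num)).trans (S.pow_le_scale huN)
  have hu₃ : 1 ≤ u ^ 3 := one_le_pow₀ hu₁
  have hW : 1 ≤ N / u := by
    rw [one_le_div hu₀]
    nlinarith
  have hNW : K ^ 61 * (N / u) ^ s < N ^ s := by
    rw [div_rpow hN.le hu₀.le, mul_div_assoc', div_lt_iff₀ (by positivity), mul_comm]
    exact mul_lt_mul_of_pos_left hlt (by positivity)
  set ρ := u ^ 3 / N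
  have hρ : ρ ≤ 1 / 2 := by
    rw [div_le_div_iff₀ hN two_pos]
    nlinarith
  have hρW : 9 * N ≤ 2 * ρ * (N / u) ^ 2 := by
    rw [show 2 * ρ * (N / u) ^ 2 = 2 * u * N by simp only [ρ]; field_simp]
    gcongr
    linarith
  have hstep : ∀ q ∈ slopes R (N / u), |q| ≤ 2 → ∀ β : ℤ, β = 0 ∨ β = 1 →
      ∃ q' ∈ slopes R (N / u), |(q + β) / 2 - q'| ≤ ρ := by
    by_contra! ⟨q, hq, hq₂, β, hβ, hgap⟩
    exact hNW.not_ge (S.rpow_le_of_slope_gap hW hρW hq hq₂ hβ hgap)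
  have h0 := S.zero_mem_slopes hW (hNW.trans_le' (by gcongr; norm_num))
  obtain ⟨n, hn⟩ := exists_pow_lt_of_lt_one (by positivity : 0 < ρ) one_half_lt_one
  obtain ⟨q, hq, -, hqx⟩ := exists_abs_sub_le_of_dyadic (by positivity) hρ h0 hstep n x hx₀ hx₁
  exact ⟨q, hq, by linarith⟩

/-- The slopes with denominators at least `N / u`, where `u` is a small power of `N`, have a dyadic
gap or are dense; each alternative bounds `u`. -/
theorem rpow_le_of_scale (S : SmallDilateSums s N K p₀ R) {u : ℝ} (hu : 1 ≤ u)
    (huN : N ^ s * u ^ 18 = N) : u ^ s ≤ K ^ 61 := by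
  by_contra! hlt
  have hK := S.ten_le
  have hK₁ : 1 ≤ K := by linarith
  have hKu : K < u := by
    calc K ≤ K ^ 61 := le_self_pow₀ hK₁ (by norm_num)
      _ < u ^ s := hlt
      _ ≤ u ^ (1 : ℝ) := rpow_le_rpow_of_exponent_le hu S.exponent_lt_one.le
      _ = u := rpow_one u
  exact (hlt.trans_le' (pow_le_pow_right₀ hK₁ (by norm_num))).not_ge
    (S.rpow_le_of_slopes_dense (by linarith) huN fun x hx₀ hx₁ =>
      S.exists_slope_abs_sub_le (by linarith) huN hlt hx₀ hx₁)

theorem rpow_le (S : SmallDilateSums s N K p₀ R) : N ^ (s * (1 - s) / 18) ≤ K ^ 61 := by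
  have hN := S.scale_pos
  have hs₁ := S.exponent_lt_one
  have hle := S.rpow_le_of_scale (u := N ^ ((1 - s) / 18))
    (one_le_rpow S.one_le_scale (by linarith)) (by
      rw [← rpow_natCast, ← rpow_mul hN.le, ← rpow_add hN]
      norm_num)
  rwa [← rpow_mul hN.le, div_mul_eq_mul_div, mul_comm (1 - s)] at hle

end SmallDilateSums

end DenseSlopes

section IntegerGrid

variable {a b c : ℤ} {s N K : ℝ} {A B U X Y : Finset ℤ} {G : Finset (ℤ × ℤ)} {m n : ℕ}

lemma add_subset_sumDiff (hX : X ⊆ sumDiff U m) (hY : Y ⊆ sumDiff U n) :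
    X + Y ⊆ sumDiff U (m + n) :=
  add_subset_iff.2 fun _ hx _ hy => add_mem_sumDiff (hX hx) (hY hy)

lemma mul_sub_add_mul_sub_mem_sumDiff (h0 : 0 ∈ U) (hA : A ⊆ sumDiff U 1) (hB : B ⊆ sumDiff U 1)
    {q : ℕ} (hq : a.natAbs * 2 + b.natAbs * 2 ≤ q) :
    ∀ x ∈ A, ∀ x' ∈ A, ∀ y ∈ B, ∀ y' ∈ B, a * (x - x') + b * (y - y') ∈ sumDiff U q :=
  fun _ hx _ hx' _ hy _ hy' => sumDiff_subset_sumDiff h0 hq <| add_mem_sumDiff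
    (zsmul_mem_sumDiff (sub_mem_sumDiff (hA hx) (hA hx')) a)
    (zsmul_mem_sumDiff (sub_mem_sumDiff (hB hy) (hB hy')) b)

lemma exists_forall_card_sumCells_add_le {L h k g : ℝ} {q : ℕ} (hdisc : b ^ 2 - 4 * a * c ≠ 0)
    (hN : 0 < N) (hL : 1 ≤ L) (hk : 0 < k) (hg : 0 < g) (h0 : 0 ∈ U)
    (hA : A ⊆ sumDiff U 1) (hB : B ⊆ sumDiff U 1)
    (hq : (2 * a).natAbs * 2 + b.natAbs * 2 ≤ q) (hq' : b.natAbs * 2 + (2 * c).natAbs * 2 ≤ q)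
    (hU : #(sumDiff U (1 + 1 + q)) ≤ h) (hG : G ⊆ A ×ˢ B) (hpos : ∀ p ∈ G, N / L ≤ p.1)
    (hcells : #(G.image fun p => cell N (binaryForm a b c p.1 p.2 : ℤ)) ≤ k) (hgG : g ≤ #G) :
    ∃ p₀ ∈ A + A, N / L ≤ p₀ ∧ ∃ R ⊆ B + B, g ^ 2 ≤ 6 * L * k * h ^ 2 * #R ∧
      ∀ r ∈ R, #(sumCells N (B + B) (B + B) p₀ r) * g ^ 2 ≤ 10 * k * h ^ 4 := by
  have hle {X : Finset ℤ} {i : ℕ} (hX : X ⊆ sumDiff U i) (hi : i ≤ 1 + 1 + q) : #X ≤ h :=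
    (Nat.cast_le.2 (card_le_card (hX.trans (sumDiff_subset_sumDiff h0 hi)))).trans hU
  have hAA : A + A ⊆ sumDiff U (1 + 1) := add_subset_sumDiff hA hA
  have hBB : B + B ⊆ sumDiff U (1 + 1) := add_subset_sumDiff hB hB
  have hBBq : #(B + B + sumDiff U q) ≤ h := hle (add_subset_sumDiff hBB subset_rfl) le_rfl
  exact exists_forall_card_sumCells_le hdisc hN hL hk hg hG hpos
    (mul_sub_add_mul_sub_mem_sumDiff h0 hA hB hq) (mul_sub_add_mul_sub_mem_sumDiff h0 hA hB hq')
    (hle hAA (by lia)) (hle hBB (by lia)) (hle subset_rfl (by lia)) hBBq hBBq hcells hgG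

lemma card_sumCells_self_le (N : ℝ) (B : Finset ℤ) (p : ℤ) : #(sumCells N B B p p) ≤ #(B + B) := by
  refine (card_le_card fun w hw => ?_).trans (card_image_le (f := fun x : ℤ => cell N (p * x)))
  obtain ⟨⟨x, y⟩, hxy, rfl⟩ := mem_image.1 hw
  obtain ⟨hx, hy⟩ := mem_product.1 hxy
  exact mem_image.2 ⟨x + y, add_mem_add hx hy, by push_cast; rw [mul_add]⟩

lemma card_dilateCells_add_le_of_subset (N : ℝ) (h : X ⊆ Y) (p r : ℤ) :
    #(dilateCells N X p + dilateCells N X r) ≤ 2 * #(sumCells N Y Y p r) :=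
  (card_dilateCells_add_le N X p r).trans
    (Nat.mul_le_mul_left 2 (card_le_card (image_subset_image (product_subset_product h h))))

lemma le_pow_mul_of_mul_sq_le {d t u : ℝ} {i : ℕ} (hK : 10 ≤ K) (hd : 0 < d) (hu : 0 ≤ u)
    (h : t * (d ^ 2 / (2 * K ^ 3)) ^ 2 ≤ 10 * K ^ i * (d ^ 4 * u)) : t ≤ K ^ (i + 8) * u := by
  have hmul : d ^ 4 * t ≤ d ^ 4 * (40 * K ^ (i + 6) * u) := by
    calc d ^ 4 * t = t * (d ^ 2 / (2 * K ^ 3)) ^ 2 * (4 * K ^ 6) := by field_simp; ring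
      _ ≤ 10 * K ^ i * (d ^ 4 * u) * (4 * K ^ 6) := by gcongr
      _ = d ^ 4 * (40 * K ^ (i + 6) * u) := by ring
  calc t ≤ 40 * K ^ (i + 6) * u := le_of_mul_le_mul_left hmul (by positivity)
    _ ≤ K ^ 2 * K ^ (i + 6) * u := by gcongr; nlinarith
    _ = K ^ (i + 8) * u := by ring

/-- The integer version of a counterexample at scale `N`, with losses bounded by `K`: a
non-concentrated set `A` and a graph `G` on it, dense in every row and column, along which sums
take few values and the form `ax² + bxy + cy²` meets few cells of width `N`. -/
structure SmallGraphImages (a b c : ℤ) (s N K : ℝ) (A : Finset ℤ) (G : Finset (ℤ × ℤ)) : Prop where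
  one_le_scale : 1 ≤ N
  ten_le : 10 ≤ K
  mem_range : ∀ x ∈ A, 0 ≤ (x : ℝ) ∧ x ≤ N
  le_card : N ^ s ≤ #A
  card_le : #A ≤ K * N ^ s
  nonConcentrated : NonConcentrated s K A
  subset_product : G ⊆ A ×ˢ A
  card_le_card_row : ∀ x ∈ A, #A ≤ K * #{y ∈ A | (x, y) ∈ G}
  card_le_card_col : ∀ y ∈ A, #A ≤ K * #{x ∈ A | (x, y) ∈ G}
  card_graphSum_le : #(graphSum G) ≤ K * #A
  card_image_cell_le : #(G.image fun p => cell N (binaryForm a b c p.1 p.2 : ℤ)) ≤ K * #A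

lemma NonConcentrated.card_filter_fst_lt_le {d : ℝ} (hA : NonConcentrated s K A)
    (hA₀ : ∀ x ∈ A, 0 ≤ (x : ℝ)) (hG : G ⊆ A ×ˢ A) (hd : 1 ≤ d) :
    #(G.filter fun p => ¬ d ≤ (p.1 : ℝ)) ≤ K * d ^ s * #A := by
  have hsub : (G.filter fun p => ¬ d ≤ (p.1 : ℝ)) ⊆
      (A.filter fun t : ℤ => (0 : ℝ) ≤ t ∧ t ≤ 0 + d) ×ˢ A := by
    rintro ⟨x, y⟩ hp
    obtain ⟨hpG, hx⟩ := mem_filter.1 hp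
    obtain ⟨hxA, hyA⟩ := mem_product.1 (hG hpG)
    exact mem_product.2 ⟨mem_filter.2 ⟨hxA, hA₀ x hxA, by linarith⟩, hyA⟩
  have hcard := card_le_card hsub
  rw [card_product] at hcard
  calc (#(G.filter fun p => ¬ d ≤ (p.1 : ℝ)) : ℝ)
      ≤ #(A.filter fun t : ℤ => (0 : ℝ) ≤ t ∧ t ≤ 0 + d) * #A := mod_cast hcard
    _ ≤ K * d ^ s * #A := mul_le_mul_of_nonneg_right (hA 0 d hd) (Nat.cast_nonneg _)

namespace SmallGraphImages

lemma scale_pos (S : SmallGraphImages a b c s N K A G) : 0 < N := one_pos.trans_le S.one_le_scale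

lemma pos (S : SmallGraphImages a b c s N K A G) : 0 < K := by linarith [S.ten_le]

lemma one_le (S : SmallGraphImages a b c s N K A G) : 1 ≤ K := by linarith [S.ten_le]

lemma card_pos (S : SmallGraphImages a b c s N K A G) : (0 : ℝ) < #A :=
  (rpow_pos_of_pos S.scale_pos s).trans_le S.le_card

lemma nonempty (S : SmallGraphImages a b c s N K A G) : A.Nonempty :=
  Finset.card_pos.1 (Nat.cast_pos.1 S.card_pos)

lemma two_mul_pow_le_rpow (S : SmallGraphImages a b c s N K A G) {j : ℕ} (hj : 5 ≤ j * s) :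
    2 * K ^ 4 ≤ (K ^ j) ^ s := by
  have hK := S.pos
  calc 2 * K ^ 4 ≤ K * K ^ 4 := by gcongr; linarith [S.ten_le]
    _ = K ^ (5 : ℝ) := by rw [← pow_succ']; exact_mod_cast (rpow_natCast K 5).symm
    _ ≤ K ^ (j * s) := rpow_le_rpow_of_exponent_le S.one_le hj
    _ = (K ^ j) ^ s := by rw [rpow_mul hK.le, rpow_natCast]

lemma sq_card_div_le_card_filter (S : SmallGraphImages a b c s N K A G) {j : ℕ}
    (hj : 5 ≤ j * s) (hN : K ^ j ≤ N) {H : Finset (ℤ × ℤ)} (hHG : H ⊆ G)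
    (hH : (#A : ℝ) ^ 2 ≤ K ^ 3 * #H) :
    (#A : ℝ) ^ 2 / (2 * K ^ 3) ≤ #(H.filter fun p => N / K ^ j ≤ (p.1 : ℝ)) := by
  have hK := S.pos
  have hA := S.card_pos
  have hfew := S.nonConcentrated.card_filter_fst_lt_le (fun x hx => (S.mem_range x hx).1)
    (hHG.trans S.subset_product) ((one_le_div (pow_pos hK j)).2 hN)
  have hsplit : (#(H.filter fun p => N / K ^ j ≤ (p.1 : ℝ)) : ℝ) +
      #(H.filter fun p => ¬ N / K ^ j ≤ (p.1 : ℝ)) = #H :=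
    mod_cast card_filter_add_card_filter_not (s := H) fun p => N / K ^ j ≤ (p.1 : ℝ)
  have hhalf : 2 * K ^ 3 * (K * (N / K ^ j) ^ s * #A) ≤ (#A : ℝ) ^ 2 := by
    calc 2 * K ^ 3 * (K * (N / K ^ j) ^ s * #A)
        = 2 * K ^ 4 * (N ^ s * #A) / (K ^ j) ^ s := by
          rw [div_rpow S.scale_pos.le (pow_pos hK j).le]; ring
      _ ≤ (K ^ j) ^ s * (#A * #A) / (K ^ j) ^ s := by
          gcongr
          exacts [mul_nonneg (rpow_nonneg S.scale_pos.le s) hA.le, S.two_mul_pow_le_rpow hj,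
            S.le_card]
      _ = (#A : ℝ) ^ 2 := by field_simp
  rw [div_le_iff₀' (by positivity)]
  have hloss := mul_le_mul_of_nonneg_left hfew (show 0 ≤ 2 * K ^ 3 by positivity)
  linear_combination 2 * hH + hloss + hhalf - 2 * K ^ 3 * hsplit

end SmallGraphImages

end IntegerGrid

section IntegerTheorem

variable {a b c : ℤ} {s N K : ℝ} {A : Finset ℤ} {G : Finset (ℤ × ℤ)} {j n q : ℕ}

lemma left_subset_sumDiff_neg_union (A B : Finset ℤ) : A ⊆ sumDiff (-A ∪ B ∪ {0}) 1 :=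
  fun x hx => by
    simpa using sub_mem_sumDiff_one (show 0 ∈ -A ∪ B ∪ {0} by simp)
      (show -x ∈ -A ∪ B ∪ {0} by simp [hx])

lemma right_subset_sumDiff_neg_union (A B : Finset ℤ) : B ⊆ sumDiff (-A ∪ B ∪ {0}) 1 :=
  fun x hx => by
    simpa using sub_mem_sumDiff_one (show x ∈ -A ∪ B ∪ {0} by simp [hx])
      (show 0 ∈ -A ∪ B ∪ {0} by simp)

namespace SmallGraphImages

lemma rpow_le_pow_mul_of_sq_le (S : SmallGraphImages a b c s N K A G) {u : ℝ} (hu : 0 ≤ u)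
    (h : ((#A : ℝ) ^ 2 / (2 * K ^ 3)) ^ 2 ≤
      6 * K ^ j * (K * #A) * (K ^ (34 * n) * #A) ^ 2 * u) :
    N ^ s ≤ K ^ (j + 68 * n + 9) * u := by
  have hK := S.pos
  refine S.le_card.trans (le_pow_mul_of_mul_sq_le (i := j + 68 * n + 1) S.ten_le S.card_pos hu ?_)
  calc (#A : ℝ) * ((#A : ℝ) ^ 2 / (2 * K ^ 3)) ^ 2
      ≤ #A * (6 * K ^ j * (K * #A) * (K ^ (34 * n) * #A) ^ 2 * u) := by gcongr
    _ = 6 * K ^ (j + 68 * n + 1) * ((#A : ℝ) ^ 4 * u) := by ring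
    _ ≤ 10 * K ^ (j + 68 * n + 1) * ((#A : ℝ) ^ 4 * u) := by gcongr; norm_num

lemma two_mul_le_of_mul_sq_le (S : SmallGraphImages a b c s N K A G) {t : ℝ}
    (h : t * ((#A : ℝ) ^ 2 / (2 * K ^ 3)) ^ 2 ≤ 10 * (K * #A) * (K ^ (34 * n) * #A) ^ 4) :
    2 * t ≤ K ^ (136 * n + 11) * N ^ s := by
  have hK := S.pos
  have ht : t ≤ K ^ (136 * n + 9) * #A :=
    le_pow_mul_of_mul_sq_le (i := 136 * n + 1) S.ten_le S.card_pos S.card_pos.le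
      (h.trans_eq (by ring))
  calc 2 * t ≤ 2 * (K ^ (136 * n + 9) * #A) := by gcongr
    _ ≤ K * (K ^ (136 * n + 9) * (K * N ^ s)) := by
        gcongr
        exacts [by linarith [S.ten_le], S.card_le]
    _ = K ^ (136 * n + 11) * N ^ s := by ring

lemma card_dilateCells_add_le (S : SmallGraphImages a b c s N K A G) {R X : Finset ℤ} {p₀ : ℤ}
    (hR : R ⊆ X) (hX : #(X + X) ≤ K ^ (34 * n) * #A)
    (hsums : ∀ r ∈ R, #(sumCells N X X p₀ r) * ((#A : ℝ) ^ 2 / (2 * K ^ 3)) ^ 2 ≤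
      10 * (K * #A) * (K ^ (34 * n) * #A) ^ 4) :
    ∀ r ∈ insert p₀ R,
      #(dilateCells N R p₀ + dilateCells N R r) ≤ K ^ (136 * n + 11) * N ^ s := by
  have hK := S.pos
  intro r hr
  rcases mem_insert.1 hr with rfl | hrR
  · have hself := (card_dilateCells_add_le_of_subset N hR r r).trans
      (Nat.mul_le_mul_left 2 (card_sumCells_self_le N X r))
    calc (#(dilateCells N R r + dilateCells N R r) : ℝ) ≤ 2 * #(X + X) := mod_cast hself
      _ ≤ K * (K ^ (34 * n) * (K * N ^ s)) := by
          gcongr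
          exacts [by linarith [S.ten_le], hX.trans (by gcongr; exact S.card_le)]
      _ = K ^ (34 * n + 2) * N ^ s := by ring
      _ ≤ K ^ (136 * n + 11) * N ^ s := mul_le_mul_of_nonneg_right
          (pow_le_pow_right₀ S.one_le (by lia)) (rpow_nonneg S.scale_pos.le s)
  · have hsum := card_dilateCells_add_le_of_subset N hR p₀ r
    exact le_trans (mod_cast hsum) (S.two_mul_le_of_mul_sq_le (hsums r hrR))

lemma exists_dilates (S : SmallGraphImages a b c s N K A G)
    (hdisc : b ^ 2 - 4 * a * c ≠ 0) (hq : (2 * a).natAbs * 2 + b.natAbs * 2 ≤ q)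
    (hq' : b.natAbs * 2 + (2 * c).natAbs * 2 ≤ q) (hj : 5 ≤ j * s) (hN : K ^ j ≤ N) :
    ∃ A' ⊆ A, ∃ B ⊆ A, ∃ p₀ : ℤ, ∃ R ⊆ B + B, #A ≤ K ^ 2 * #A' ∧ N / K ^ j ≤ p₀ ∧
      #(B + B + (B + B)) ≤ K ^ (34 * (q + 4)) * #A ∧ #(B + B - A') ≤ K ^ (34 * (q + 4)) * #A ∧
      ((#A : ℝ) ^ 2 / (2 * K ^ 3)) ^ 2 ≤
        6 * K ^ j * (K * #A) * (K ^ (34 * (q + 4)) * #A) ^ 2 * #R ∧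
      ∀ r ∈ R, #(sumCells N (B + B) (B + B) p₀ r) * ((#A : ℝ) ^ 2 / (2 * K ^ 3)) ^ 2 ≤
        10 * (K * #A) * (K ^ (34 * (q + 4)) * #A) ^ 4 := by
  have hK := S.pos
  have hA := S.card_pos
  obtain ⟨A', hA', B, hB, hAA', hG', hU⟩ := exists_dense_subsets_card_sumDiff_le S.ten_le
    S.nonempty S.card_le_card_row S.card_le_card_col S.card_graphSum_le
  have hA'U := left_subset_sumDiff_neg_union A' B
  have hBU := right_subset_sumDiff_neg_union A' B
  have h0 : (0 : ℤ) ∈ -A' ∪ B ∪ {0} := by simp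
  generalize -A' ∪ B ∪ {0} = U at hU hA'U hBU h0
  have hle {X : Finset ℤ} {i : ℕ} (hX : X ⊆ sumDiff U i) (hi : i ≤ q + 4) :
      #X ≤ K ^ (34 * (q + 4)) * #A :=
    (Nat.cast_le.2 (card_le_card (hX.trans (sumDiff_subset_sumDiff h0 hi)))).trans (hU _)
  have hBB : B + B ⊆ sumDiff U (1 + 1) := add_subset_sumDiff hBU hBU
  have hBBA' : B + B - A' ⊆ sumDiff U (1 + 1 + 1) :=
    sub_subset_iff.2 fun x hx y hy => sub_mem_sumDiff (hBB hx) (hA'U hy)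
  have hsub : (A' ×ˢ B ∩ G).filter (fun p => N / K ^ j ≤ (p.1 : ℝ)) ⊆ A' ×ˢ B ∩ G :=
    filter_subset _ _
  obtain ⟨p₀, -, hp₀, R, hR, hRcard, hsums⟩ := exists_forall_card_sumCells_add_le hdisc
    S.scale_pos (one_le_pow₀ S.one_le) (mul_pos hK hA) (by positivity) h0 hA'U hBU hq hq'
    (hle subset_rfl (by lia)) (hsub.trans inter_subset_left) (fun p hp => (mem_filter.1 hp).2)
    ((Nat.cast_le.2 (card_le_card (image_subset_image (hsub.trans inter_subset_right)))).trans
      S.card_image_cell_le)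
    (S.sq_card_div_le_card_filter hj hN inter_subset_right hG')
  exact ⟨A', hA', B, hB, p₀, R, hR, hAA', hp₀, hle (add_subset_sumDiff hBB hBB) (by lia),
    hle hBBA' (by lia), hRcard, hsums⟩

theorem exists_smallDilateSums (S : SmallGraphImages a b c s N K A G) (hs₀ : 0 < s) (hs₁ : s < 1)
    (hdisc : b ^ 2 - 4 * a * c ≠ 0) (hq : (2 * a).natAbs * 2 + b.natAbs * 2 ≤ q)
    (hq' : b.natAbs * 2 + (2 * c).natAbs * 2 ≤ q) (hj : 5 ≤ j * s) (hN : K ^ j ≤ N) :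
    ∃ p₀ R, SmallDilateSums s N (K ^ (j + 136 * (q + 4) + 11)) p₀ R := by
  have hK := S.pos
  obtain ⟨A', hA', B, hB, p₀, R, hR, hAA', hp₀, hBB, hBBA', hRcard, hsums⟩ :=
    S.exists_dilates hdisc hq hq' hj hN
  have hA'₀ : A'.Nonempty := by
    rw [← Finset.card_pos, ← Nat.cast_pos (α := ℝ)]
    exact pos_of_mul_pos_right (S.card_pos.trans_le hAA') (by positivity)
  have hdiff : #(R - A') ≤ K ^ (34 * (q + 4) + 2) * #A' := by
    calc (#(R - A') : ℝ) ≤ #(B + B - A') := mod_cast card_le_card (sub_subset_sub_right hR)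
      _ ≤ K ^ (34 * (q + 4)) * (K ^ 2 * #A') := hBBA'.trans (by gcongr)
      _ = K ^ (34 * (q + 4) + 2) * #A' := by ring
  have hpow {i : ℕ} (hi : i ≤ j + 136 * (q + 4) + 11) :
      K ^ i ≤ K ^ (j + 136 * (q + 4) + 11) := pow_le_pow_right₀ S.one_le hi
  refine ⟨p₀, R, hs₀, hs₁, S.one_le_scale, S.ten_le.trans (le_self_pow₀ S.one_le (by lia)), ?_,
    fun r hr => ?_, ?_, ?_, fun r hr => ?_⟩
  · rw [div_le_iff₀' (pow_pos hK j)] at hp₀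
    have hp₀' : (0 : ℝ) < p₀ := pos_of_mul_pos_right (S.scale_pos.trans_le hp₀) (by positivity)
    exact hp₀.trans (mul_le_mul_of_nonneg_right (hpow (by lia)) hp₀'.le)
  · obtain ⟨x, hx, y, hy, rfl⟩ := mem_add.1 (hR hr)
    obtain ⟨hx₀, hx₁⟩ := S.mem_range x (hB hx)
    obtain ⟨hy₀, hy₁⟩ := S.mem_range y (hB hy)
    push_cast
    exact ⟨by linarith, by linarith⟩
  · exact (S.rpow_le_pow_mul_of_sq_le (Nat.cast_nonneg _) hRcard).trans
      (mul_le_mul_of_nonneg_right (hpow (by lia)) (Nat.cast_nonneg _))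
  · refine ((S.nonConcentrated.mono hA' le_rfl).of_card_sub_le hA'₀ hK.le hdiff).mono
      subset_rfl ?_
    rw [← pow_succ']
    exact hpow (by lia)
  · exact (S.card_dilateCells_add_le hR hBB hsums r hr).trans
      (mul_le_mul_of_nonneg_right (hpow (by lia)) (rpow_nonneg S.scale_pos.le s))

theorem exists_rpow_le_pow (hs₀ : 0 < s) (hs₁ : s < 1) (hdisc : b ^ 2 - 4 * a * c ≠ 0) :
    ∃ m : ℕ, ∀ {N K A G}, SmallGraphImages a b c s N K A G → N ^ (s * (1 - s) / 18) ≤ K ^ m := by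
  obtain ⟨j, hj⟩ := exists_nat_ge (5 / s)
  rw [div_le_iff₀ hs₀] at hj
  obtain ⟨q, hq⟩ : ∃ q, q = (2 * a).natAbs * 2 + b.natAbs * 2 + (2 * c).natAbs * 2 := ⟨_, rfl⟩
  refine ⟨(j + 136 * (q + 4) + 11) * 61, fun {N K A G} S => ?_⟩
  rcases lt_or_ge N (K ^ j) with hN | hN
  · calc N ^ (s * (1 - s) / 18) ≤ N ^ (1 : ℝ) :=
          rpow_le_rpow_of_exponent_le S.one_le_scale (by nlinarith)
      _ ≤ K ^ j := by rw [rpow_one]; exact hN.le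
      _ ≤ K ^ ((j + 136 * (q + 4) + 11) * 61) := pow_le_pow_right₀ S.one_le (by lia)
  · obtain ⟨p₀, R, hR⟩ :=
      S.exists_smallDilateSums hs₀ hs₁ hdisc (q := q) (by lia) (by lia) hj hN
    rw [pow_mul]
    exact hR.rpow_le

end SmallGraphImages

end IntegerTheorem

section CoverNum

lemma exists_card_eq_coverNum (δ : ℝ) {A : Set ℝ} (hA : A.Finite) :
    ∃ F : Finset (Set ℝ), #F = coverNum δ A ∧
      (∀ U ∈ F, Metric.ediam U ≤ ENNReal.ofReal δ) ∧ A ⊆ ⋃ U ∈ F, U := by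
  refine Nat.sInf_mem (s := {m : ℕ | ∃ F : Finset (Set ℝ), #F = m ∧
      (∀ U ∈ F, Metric.ediam U ≤ ENNReal.ofReal δ) ∧ A ⊆ ⋃ U ∈ F, U})
    ⟨_, hA.toFinset.image fun x => {x}, rfl, fun U hU => ?_, fun x hx => ?_⟩
  · obtain ⟨x, -, rfl⟩ := mem_image.1 hU
    exact Metric.ediam_singleton.trans_le zero_le
  · exact Set.mem_biUnion (mem_image_of_mem _ (hA.mem_toFinset.2 hx)) (Set.mem_singleton x)

theorem card_image_le_mul_coverNum {ι : Type*} {δ c M : ℝ} (hδ : 0 < δ) (hc : 0 ≤ c) (hM : 0 ≤ M)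
    {G : Finset ι} {F : ι → ℝ} {f : ι → ℤ} (h : ∀ p ∈ G, |f p - c * F p / δ| ≤ M) :
    #(G.image f) ≤ (c + 2 * M + 1) * coverNum δ (F '' G) := by
  obtain ⟨𝒰, hcard, hdiam, hcover⟩ := exists_card_eq_coverNum δ (G.finite_toSet.image F)
  have hmem : ∀ w ∈ G.image f, ∃ U ∈ 𝒰, ∃ p ∈ G, f p = w ∧ F p ∈ U := fun w hw => by
    obtain ⟨p, hp, rfl⟩ := mem_image.1 hw
    obtain ⟨U, hU, hpU⟩ := Set.mem_iUnion₂.1 (hcover (Set.mem_image_of_mem F hp))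
    exact ⟨U, hU, p, hp, rfl, hpU⟩
  choose! u hu using hmem
  rw [← hcard]
  refine card_le_mul_card_of_card_fiber_le (fun w hw => (hu w hw).1) fun U hU =>
    card_le_add_one_of_forall_sub_le (by positivity) fun x hx y hy => ?_
  obtain ⟨hxG, rfl⟩ := mem_filter.1 hx
  obtain ⟨hyG, hyx⟩ := mem_filter.1 hy
  obtain ⟨-, p, hp, rfl, hpU⟩ := hu x hxG
  obtain ⟨-, q, hq, rfl, hqU⟩ := hu y hyG
  rw [hyx] at hqU
  have hdist : F p - F q ≤ δ := by
    have hedist := (Metric.edist_le_ediam_of_mem hpU hqU).trans (hdiam _ hU)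
    rw [edist_dist, ENNReal.ofReal_le_ofReal_iff hδ.le, Real.dist_eq] at hedist
    exact (le_abs_self _).trans hedist
  have hscaled : c * F p / δ - c * F q / δ ≤ c := by
    rw [← sub_div, ← mul_sub, div_le_iff₀ hδ]
    gcongr
  linarith [abs_le.1 (h p hp), abs_le.1 (h q hq)]

end CoverNum

section Grid

lemma card_filter_fst_le_card_filter_image {α β : Type*} [DecidableEq α] [DecidableEq β]
    {A : Finset α} {G : Finset (α × α)} {f : α → β} (hG : G ⊆ A ×ˢ A) (hf : Set.InjOn f A) (x : α) :
    #{p ∈ G | p.1 = x} ≤ #{y ∈ A.image f | (f x, y) ∈ G.image (Prod.map f f)} := by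
  refine card_le_card_of_injOn (fun p => f p.2) (fun p hp => ?_) fun p hp q hq hpq => ?_
  · obtain ⟨hpG, rfl⟩ := mem_filter.1 hp
    exact mem_filter.2 ⟨mem_image_of_mem f (mem_product.1 (hG hpG)).2, mem_image_of_mem _ hpG⟩
  · obtain ⟨hpG, rfl⟩ := mem_filter.1 hp
    obtain ⟨hqG, hqp⟩ := mem_filter.1 hq
    exact Prod.ext hqp.symm (hf (mem_product.1 (hG hpG)).2 (mem_product.1 (hG hqG)).2 hpq)

lemma card_filter_snd_le_card_filter_image {α β : Type*} [DecidableEq α] [DecidableEq β]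
    {A : Finset α} {G : Finset (α × α)} {f : α → β} (hG : G ⊆ A ×ˢ A) (hf : Set.InjOn f A) (y : α) :
    #{p ∈ G | p.2 = y} ≤ #{x ∈ A.image f | (x, f y) ∈ G.image (Prod.map f f)} := by
  refine card_le_card_of_injOn (fun p => f p.1) (fun p hp => ?_) fun p hp q hq hpq => ?_
  · obtain ⟨hpG, rfl⟩ := mem_filter.1 hp
    exact mem_filter.2 ⟨mem_image_of_mem f (mem_product.1 (hG hpG)).1, mem_image_of_mem _ hpG⟩
  · obtain ⟨hpG, rfl⟩ := mem_filter.1 hp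
    obtain ⟨hqG, hqp⟩ := mem_filter.1 hq
    exact Prod.ext (hf (mem_product.1 (hG hpG)).1 (mem_product.1 (hG hqG)).1 hpq) hqp.symm

variable {δ s x y : ℝ} {A : Finset ℝ} {G : Finset (ℝ × ℝ)}

lemma injOn_cell (hδ : 0 < δ) (hA : ∀ x ∈ A, ∀ y ∈ A, x ≠ y → δ ≤ |x - y|) :
    Set.InjOn (cell δ) A := fun x hx y hy hxy => by
  by_contra hne
  exact (abs_sub_lt_of_cell_eq hδ hxy).not_ge (hA x hx y hy hne)

lemma nonConcentrated_image_cell {c : ℝ} (hδ : 0 < δ) (hs : s ≤ 1) (hc : 0 ≤ c)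
    (hA : ∀ x l : ℝ, δ ≤ l → #(A.filter fun t => t ∈ Set.Icc x (x + l)) ≤ c * l ^ s) :
    NonConcentrated s (c * (2 * δ ^ s)) (A.image (cell δ)) := by
  intro x l hl
  have hsub : ((A.image (cell δ)).filter fun t : ℤ => x ≤ t ∧ t ≤ x + l) ⊆
      (A.filter fun t => t ∈ Set.Icc (δ * x) (δ * x + δ * (2 * l))).image (cell δ) := fun w hw => by
    obtain ⟨hw, hxw, hwl⟩ := mem_filter.1 hw
    obtain ⟨t, ht, rfl⟩ := mem_image.1 hw
    have hle := mul_cell_le hδ t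
    have hlt := lt_mul_cell_add hδ t
    exact mem_image_of_mem _ (mem_filter.2 ⟨ht, by nlinarith, by nlinarith⟩)
  calc (#((A.image (cell δ)).filter fun t : ℤ => x ≤ t ∧ t ≤ x + l) : ℝ)
      ≤ #(A.filter fun t => t ∈ Set.Icc (δ * x) (δ * x + δ * (2 * l))) :=
        Nat.cast_le.2 ((card_le_card hsub).trans card_image_le)
    _ ≤ c * (δ * (2 * l)) ^ s := hA _ _ (by nlinarith)
    _ ≤ c * (δ ^ s * (2 * l ^ s)) := by
        rw [mul_rpow hδ.le (by linarith)]
        gcongr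
        exact mul_rpow_le_mul_rpow hs one_le_two (by linarith)
    _ = c * (2 * δ ^ s) * l ^ s := by ring

lemma card_graphSum_image_cell_le (hδ : 0 < δ) (G : Finset (ℝ × ℝ)) :
    #(graphSum (G.image (Prod.map (cell δ) (cell δ)))) ≤
      6 * (coverNum δ ((fun p : ℝ × ℝ => p.1 + p.2) '' G) : ℝ) := by
  have happrox : ∀ p ∈ G, |((cell δ p.1 + cell δ p.2 : ℤ) : ℝ) - 1 * (p.1 + p.2) / δ| ≤ 2 := by
    rintro ⟨x, y⟩ -
    have hx := Int.floor_le (x / δ)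
    have hx' := Int.lt_floor_add_one (x / δ)
    have hy := Int.floor_le (y / δ)
    have hy' := Int.lt_floor_add_one (y / δ)
    rw [one_mul, add_div, abs_le]
    push_cast [cell]
    constructor <;> linarith
  rw [graphSum, image_image]
  calc _ ≤ (1 + 2 * 2 + 1) * (coverNum δ ((fun p : ℝ × ℝ => p.1 + p.2) '' G) : ℝ) :=
        card_image_le_mul_coverNum hδ zero_le_one zero_le_two happrox
    _ = _ := by norm_num

lemma abs_mul_cell_mul_cell_sub_le (hδ : 0 < δ) (hx : x ∈ Set.Icc 0 1) (hy : y ∈ Set.Icc 0 1) :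
    |δ * (cell δ x * cell δ y) - x * y / δ| ≤ 2 := by
  have hxle := mul_cell_le hδ x
  have hxlt := lt_mul_cell_add hδ x
  have hyle := mul_cell_le hδ y
  have hylt := lt_mul_cell_add hδ y
  have hy₀ : 0 ≤ δ * (cell δ y : ℝ) :=
    mul_nonneg hδ.le (Int.cast_nonneg (Int.floor_nonneg.2 (div_nonneg hy.1 hδ.le)))
  set u := δ * (cell δ x : ℝ)
  set v := δ * (cell δ y : ℝ)
  have hsplit : δ * ((cell δ x : ℝ) * cell δ y) - x * y / δ =
      -((x * (y - v) + v * (x - u)) / δ) := by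
    simp only [u, v]
    field_simp
    ring
  have hfst : x * (y - v) ≤ 1 * δ :=
    mul_le_mul hx.2 (by linarith) (by linarith) zero_le_one
  have hsnd : v * (x - u) ≤ 1 * δ :=
    mul_le_mul (hyle.trans hy.2) (by linarith) (by linarith) zero_le_one
  have hnonneg : 0 ≤ x * (y - v) + v * (x - u) :=
    add_nonneg (mul_nonneg hx.1 (by linarith)) (mul_nonneg hy₀ (by linarith))
  rw [hsplit, abs_neg, abs_of_nonneg (div_nonneg hnonneg hδ.le), div_le_iff₀ hδ]
  linarith

lemma abs_cell_binaryForm_sub_le (hδ : 0 < δ) (hx : x ∈ Set.Icc 0 1) (hy : y ∈ Set.Icc 0 1)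
    (a b c : ℤ) :
    |cell δ⁻¹ (binaryForm a b c (cell δ x) (cell δ y) : ℤ) - binaryForm (a : ℝ) b c x y / δ| ≤
      2 * (|(a : ℝ)| + |(b : ℝ)| + |(c : ℝ)|) + 1 := by
  have hterm (k : ℤ) {z w : ℝ} (hz : z ∈ Set.Icc 0 1) (hw : w ∈ Set.Icc 0 1) :
      |k * (δ * (cell δ z * cell δ w) - z * w / δ)| ≤ |(k : ℝ)| * 2 := by
    rw [abs_mul]
    gcongr
    exact abs_mul_cell_mul_cell_sub_le hδ hz hw
  have ha := abs_le.1 (hterm a hx hx)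
  have hb := abs_le.1 (hterm b hx hy)
  have hc := abs_le.1 (hterm c hy hy)
  have hle := Int.floor_le ((binaryForm a b c (cell δ x) (cell δ y) : ℤ) / δ⁻¹)
  have hlt := Int.lt_floor_add_one ((binaryForm a b c (cell δ x) (cell δ y) : ℤ) / δ⁻¹)
  have hsplit : (binaryForm a b c (cell δ x) (cell δ y) : ℤ) / δ⁻¹ -
      binaryForm (a : ℝ) b c x y / δ = a * (δ * (cell δ x * cell δ x) - x * x / δ) +
        b * (δ * (cell δ x * cell δ y) - x * y / δ) +
        c * (δ * (cell δ y * cell δ y) - y * y / δ) := by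
    simp only [binaryForm, div_inv_eq_mul]
    push_cast
    ring
  rw [cell, abs_le]
  constructor <;> linarith

end Grid

section Coverings

variable {δ s C X : ℝ} {A : Finset ℝ} {G : Finset (ℝ × ℝ)} {α₁ α₂ α₃ : ℤ}

/-- A `δ`-separated subset of `[0, 1]` with `⌈δ⁻ˢ⌉` points that puts at most a proportion
`C * l ^ s` of them in an interval of length `l ≥ δ`: a discretized set of dimension `s`. -/
structure IsFrostmanSet (δ s C : ℝ) (A : Finset ℝ) : Prop where
  subset_Icc : (A : Set ℝ) ⊆ Set.Icc 0 1
  separated : ∀ x ∈ A, ∀ y ∈ A, x ≠ y → δ ≤ |x - y|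
  card_eq : #A = ⌈δ ^ (-s)⌉₊
  card_filter_le : ∀ x l : ℝ, δ ≤ l → #(A.filter fun t => t ∈ Set.Icc x (x + l)) ≤ C * l ^ s * #A

lemma card_image_cell_binaryForm_le {d a₁ a₂ a₃ : ℝ} (hδ : 0 < δ) (hd : 0 ≤ d)
    (hA : (A : Set ℝ) ⊆ Set.Icc 0 1) (hG : G ⊆ A ×ˢ A)
    (h₁ : α₁ = d * a₁) (h₂ : α₂ = d * a₂) (h₃ : α₃ = d * a₃) :
    #((G.image (Prod.map (cell δ) (cell δ))).image fun p =>
      cell δ⁻¹ (binaryForm α₁ α₂ α₃ p.1 p.2 : ℤ)) ≤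
      (d + 4 * (|(α₁ : ℝ)| + |(α₂ : ℝ)| + |(α₃ : ℝ)|) + 3) *
        coverNum δ ((fun p => binaryForm a₁ a₂ a₃ p.1 p.2) '' (G : Set (ℝ × ℝ))) := by
  rw [image_image]
  refine (card_image_le_mul_coverNum (F := fun p => binaryForm a₁ a₂ a₃ p.1 p.2)
    (M := 2 * (|(α₁ : ℝ)| + |(α₂ : ℝ)| + |(α₃ : ℝ)|) + 1) hδ hd (by positivity)
    fun p hp => ?_).trans_eq (by ring)
  obtain ⟨hx, hy⟩ := mem_product.1 (hG hp)
  have hscale : d * binaryForm a₁ a₂ a₃ p.1 p.2 = binaryForm (α₁ : ℝ) α₂ α₃ p.1 p.2 := by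
    rw [binaryForm, binaryForm, h₁, h₂, h₃]
    ring
  rw [hscale]
  exact abs_cell_binaryForm_sub_le hδ (hA hx) (hA hy) α₁ α₂ α₃

namespace IsFrostmanSet

lemma inv_rpow_le_card (hA : IsFrostmanSet δ s C A) : δ⁻¹ ^ s ≤ #A := by
  rw [hA.card_eq, rpow_neg_eq_inv_rpow]
  exact Nat.le_ceil _

lemma card_le_two_mul (hA : IsFrostmanSet δ s C A) (hδ : 0 < δ) (hδ₁ : δ ≤ 1) (hs : 0 ≤ s) :
    #A ≤ 2 * δ⁻¹ ^ s := by
  rw [hA.card_eq, rpow_neg_eq_inv_rpow]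
  exact Nat.ceil_le_two_mul
    ((by norm_num : (2 : ℝ)⁻¹ ≤ 1).trans (one_le_rpow ((one_le_inv₀ hδ).2 hδ₁) hs))

lemma nonConcentrated (hA : IsFrostmanSet δ s C A) (hδ : 0 < δ) (hδ₁ : δ ≤ 1) (hs : 0 ≤ s)
    (hs₁ : s ≤ 1) (hC : 0 ≤ C) : NonConcentrated s (4 * C) (A.image (cell δ)) := by
  have hcell := nonConcentrated_image_cell (A := A) (c := C * #A) hδ hs₁ (by positivity)
    fun x l hl => (hA.card_filter_le x l hl).trans_eq (by ring)
  refine hcell.mono subset_rfl ?_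
  calc C * #A * (2 * δ ^ s) ≤ C * (2 * δ⁻¹ ^ s) * (2 * δ ^ s) := by
        gcongr
        exact hA.card_le_two_mul hδ hδ₁ hs
    _ = 4 * C * (δ⁻¹ * δ) ^ s := by
        rw [mul_rpow (inv_nonneg.2 hδ.le) hδ.le]
        ring
    _ = 4 * C := by rw [inv_mul_cancel₀ hδ.ne', one_rpow, mul_one]

theorem smallGraphImages {d a₁ a₂ a₃ : ℝ} (hA : IsFrostmanSet δ s C A)
    (hδ : 0 < δ) (hδ₁ : δ ≤ 1) (hs : 0 ≤ s) (hs₁ : s ≤ 1) (hC : 0 ≤ C) (hCX : C ≤ X) (hd : 0 ≤ d)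
    (h₁ : α₁ = d * a₁) (h₂ : α₂ = d * a₂) (h₃ : α₃ = d * a₃)
    (hX : d + 4 * (|(α₁ : ℝ)| + |(α₂ : ℝ)| + |(α₃ : ℝ)|) + 10 ≤ X) (hG : G ⊆ A ×ˢ A)
    (hrow : ∀ x ∈ A, #A ≤ X * #{p ∈ G | p.1 = x}) (hcol : ∀ y ∈ A, #A ≤ X * #{p ∈ G | p.2 = y})
    (hsum : coverNum δ ((fun p => p.1 + p.2) '' (G : Set (ℝ × ℝ))) ≤ X * #A)
    (hform : coverNum δ ((fun p => binaryForm a₁ a₂ a₃ p.1 p.2) '' (G : Set (ℝ × ℝ))) ≤ X * #A) :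
    SmallGraphImages α₁ α₂ α₃ s δ⁻¹ (X ^ 2) (A.image (cell δ))
      (G.image (Prod.map (cell δ) (cell δ))) := by
  have hinj := injOn_cell hδ hA.separated
  have hcard : #(A.image (cell δ)) = #A := card_image_of_injOn hinj
  have hT : 0 ≤ |(α₁ : ℝ)| + |(α₂ : ℝ)| + |(α₃ : ℝ)| := by positivity
  have hX₀ : 0 ≤ X := by linarith
  have hXX : X ≤ X ^ 2 := le_self_pow₀ (by linarith) two_ne_zero
  have hrange : ∀ x ∈ A.image (cell δ), 0 ≤ (x : ℝ) ∧ x ≤ δ⁻¹ := fun x hx => by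
    obtain ⟨t, ht, rfl⟩ := mem_image.1 hx
    obtain ⟨ht₀, ht₁⟩ := hA.subset_Icc ht
    refine ⟨mod_cast Int.floor_nonneg.2 (by positivity), (Int.floor_le _).trans ?_⟩
    rw [div_eq_mul_inv]
    exact mul_le_of_le_one_left (inv_nonneg.2 hδ.le) ht₁
  have hloss {B c t : ℝ} (hBt : B ≤ c * t) (hc : c ≤ X) (ht : t ≤ X * #A) (ht₀ : 0 ≤ t) :
      B ≤ X ^ 2 * #A := by
    nlinarith [mul_le_mul_of_nonneg_right hc ht₀, mul_le_mul_of_nonneg_left ht hX₀]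
  refine ⟨(one_le_inv₀ hδ).2 hδ₁, by nlinarith, hrange, ?_, ?_, ?_, ?_, ?_, ?_, ?_, ?_⟩
  · rw [hcard]
    exact hA.inv_rpow_le_card
  · rw [hcard]
    exact (hA.card_le_two_mul hδ hδ₁ hs).trans (by gcongr; linarith)
  · exact (hA.nonConcentrated hδ hδ₁ hs hs₁ hC).mono subset_rfl (by nlinarith)
  · exact (image_subset_image hG).trans (prodMap_image_product _ _ _ _).subset
  · rw [hcard, forall_mem_image]
    exact fun x hx => (hrow x hx).trans (mul_le_mul hXX
      (mod_cast card_filter_fst_le_card_filter_image hG hinj x) (Nat.cast_nonneg _) (sq_nonneg X))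
  · rw [hcard, forall_mem_image]
    exact fun y hy => (hcol y hy).trans (mul_le_mul hXX
      (mod_cast card_filter_snd_le_card_filter_image hG hinj y) (Nat.cast_nonneg _) (sq_nonneg X))
  · rw [hcard]
    exact hloss (card_graphSum_image_cell_le hδ G) (by linarith) hsum (Nat.cast_nonneg _)
  · rw [hcard]
    exact hloss (card_image_cell_binaryForm_le hδ hd hA.subset_Icc hG h₁ h₂ h₃) (by linarith)
      hform (Nat.cast_nonneg _)

end IsFrostmanSet

end Coverings

section RationalForms

lemma exists_common_denominator (a b c : ℚ) :
    ∃ d : ℕ, d ≠ 0 ∧ ∃ α β γ : ℤ, (α : ℚ) = d * a ∧ (β : ℚ) = d * b ∧ (γ : ℚ) = d * c := by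
  refine ⟨a.den * b.den * c.den, by simp, a.num * b.den * c.den, b.num * a.den * c.den,
    c.num * a.den * b.den, ?_, ?_, ?_⟩ <;>
  · push_cast
    rw [← Rat.mul_den_eq_num]
    ring

lemma exists_forall_le_rpow_neg {ε : ℝ} (hε : 0 < ε) (M : ℝ) :
    ∃ δ₀ : ℝ, 0 < δ₀ ∧ ∀ δ, 0 < δ → δ ≤ δ₀ → M ≤ δ ^ (-ε) := by
  obtain ⟨δ₀, hδ₀, h⟩ := mem_nhdsGT_iff_exists_Ioc_subset.1
    ((tendsto_rpow_neg_nhdsGT_zero (neg_lt_zero.2 hε)).eventually_ge_atTop M)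
  exact ⟨δ₀, hδ₀, fun δ hδ hle => h ⟨hδ, hle⟩⟩

variable {s : ℝ} {a₁ a₂ a₃ : ℚ}

theorem exists_rpow_mul_card_lt_coverNum (hs₀ : 0 < s) (hs₁ : s < 1)
    (hdisc : a₂ ^ 2 - 4 * a₁ * a₃ ≠ 0) :
    ∃ ε : ℝ, 0 < ε ∧ ∀ C : ℝ, 0 ≤ C → ∃ δ₀ : ℝ, 0 < δ₀ ∧ ∀ δ : ℝ, 0 < δ → δ ≤ δ₀ →
      ∀ A : Finset ℝ, IsFrostmanSet δ s C A → ∀ G : Finset (ℝ × ℝ), G ⊆ A ×ˢ A →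
        (∀ x ∈ A, δ ^ ε * #A ≤ #(G.filter fun p => p.1 = x)) →
        (∀ y ∈ A, δ ^ ε * #A ≤ #(G.filter fun p => p.2 = y)) →
        δ ^ (-ε) * #A < coverNum δ ((fun p => p.1 + p.2) '' (G : Set (ℝ × ℝ))) ∨
          δ ^ (-ε) * #A < coverNum δ
            ((fun p => binaryForm (a₁ : ℝ) a₂ a₃ p.1 p.2) '' (G : Set (ℝ × ℝ))) := by
  obtain ⟨d, hd, α₁, α₂, α₃, h₁, h₂, h₃⟩ := exists_common_denominator a₁ a₂ a₃
  have hdisc' : α₂ ^ 2 - 4 * α₁ * α₃ ≠ 0 := by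
    rw [← Int.cast_ne_zero (α := ℚ)]
    push_cast
    rw [h₁, h₂, h₃, show (d * a₂) ^ 2 - 4 * (d * a₁) * (d * a₃) =
      (d : ℚ) ^ 2 * (a₂ ^ 2 - 4 * a₁ * a₃) by ring]
    exact mul_ne_zero (pow_ne_zero 2 (Nat.cast_ne_zero.2 hd)) hdisc
  obtain ⟨m, hm⟩ := SmallGraphImages.exists_rpow_le_pow hs₀ hs₁ hdisc'
  -- With `X = δ ^ (-ε)`, two small images would give `X ^ (2 * m + 2) ≤ (X ^ 2) ^ m`.
  set ε := s * (1 - s) / 18 / (2 * m + 2) with hε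
  have hε₀ : 0 < ε := div_pos (by nlinarith) (by positivity)
  refine ⟨ε, hε₀, fun C hC => ?_⟩
  obtain ⟨δ₀, hδ₀, hδ₀X⟩ := exists_forall_le_rpow_neg hε₀
    (C + (d + 4 * (|(α₁ : ℝ)| + |(α₂ : ℝ)| + |(α₃ : ℝ)|) + 10))
  refine ⟨min δ₀ 1, lt_min hδ₀ one_pos, fun δ hδ hle A hA G hG hrow hcol => ?_⟩
  have hX := hδ₀X δ hδ (hle.trans (min_le_left _ _))
  have hT : 0 ≤ d + 4 * (|(α₁ : ℝ)| + |(α₂ : ℝ)| + |(α₃ : ℝ)|) := by positivity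
  have hdense {k : ℕ} (hk : δ ^ ε * #A ≤ k) : #A ≤ δ ^ (-ε) * k := by
    rwa [rpow_neg hδ.le, inv_mul_eq_div, le_div_iff₀' (rpow_pos_of_pos hδ ε)]
  by_contra! hsmall
  have hloss := hm (hA.smallGraphImages hδ (hle.trans (min_le_right _ _)) hs₀.le hs₁.le hC
    (by linarith) (Nat.cast_nonneg d) (mod_cast h₁) (mod_cast h₂) (mod_cast h₃) (by linarith) hG
    (fun x hx => hdense (hrow x hx)) (fun y hy => hdense (hcol y hy)) hsmall.1 hsmall.2)
  have hpow : δ⁻¹ ^ (s * (1 - s) / 18) = (δ ^ (-ε)) ^ (2 * m + 2) := by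
    rw [rpow_neg_eq_inv_rpow, ← rpow_mul_natCast (inv_nonneg.2 hδ.le), hε]
    push_cast
    rw [div_mul_cancel₀ _ (by positivity)]
  rw [hpow, ← pow_mul] at hloss
  exact hloss.not_gt (pow_lt_pow_right₀ (by linarith) (by lia))

end RationalForms

end DiscretizedSumProduct

/-- Theorem: for a nondegenerate rational quadratic form `φ(x,y) = a₁x² + a₂xy + a₃y²`
(`a₂² - 4a₁a₃ ≠ 0`) and `0 < s < 1`, there are `e = e(s) > 0`, `ε = ε(φ,s) > 0`,
`K = K(φ,s) > 0`, and for each `C ≥ 1` a `δ₀ = δ₀(φ,s,C) > 0`, such that for all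
`0 < δ ≤ δ₀`: if `A ⊆ [0,1]` is δ-separated of cardinality `⌈δ^{-s}⌉` with the
non-concentration bound, and `G ⊆ A × A` has all fibers of size at least `δ^ε #A`, then
`E_δ(A +_G A) + E_δ(φ_G(A,A)) ≥ K C^{-e} δ^{-ε} #A`. -/
theorem covering_sum_product_conditionally (s : ℝ) (hs0 : 0 < s) (hs1 : s < 1) :
    ∃ e : ℝ, 0 < e ∧
      ∀ (a₁ a₂ a₃ : ℚ), a₂ ^ 2 - 4 * a₁ * a₃ ≠ 0 →
        ∃ ε K : ℝ, 0 < ε ∧ 0 < K ∧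
          ∀ C : ℝ, 1 ≤ C →
            ∃ δ₀ : ℝ, 0 < δ₀ ∧
              ∀ δ : ℝ, 0 < δ → δ ≤ δ₀ →
                ∀ A : Finset ℝ, (↑A : Set ℝ) ⊆ Set.Icc 0 1 →
                  (∀ x ∈ A, ∀ y ∈ A, x ≠ y → δ ≤ |x - y|) →
                  A.card = ⌈δ ^ (-s)⌉₊ →
                  (∀ x l : ℝ, δ ≤ l →
                    ((A.filter (fun t => t ∈ Set.Icc x (x + l))).card : ℝ) ≤
                      C * l ^ s * (A.card : ℝ)) →
                  ∀ G : Finset (ℝ × ℝ), G ⊆ A ×ˢ A →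
                    (∀ x ∈ A, δ ^ ε * (A.card : ℝ) ≤
                      ((G.filter (fun p => p.1 = x)).card : ℝ)) →
                    (∀ y ∈ A, δ ^ ε * (A.card : ℝ) ≤
                      ((G.filter (fun p => p.2 = y)).card : ℝ)) →
                    K * C ^ (-e) * δ ^ (-ε) * (A.card : ℝ) ≤
                      (coverNum δ ((fun p : ℝ × ℝ => p.1 + p.2) '' (↑G : Set (ℝ × ℝ))) : ℝ) +
                        (coverNum δ
                          ((fun p : ℝ × ℝ =>
                            (a₁ : ℝ) * p.1 ^ 2 + (a₂ : ℝ) * (p.1 * p.2) + (a₃ : ℝ) * p.2 ^ 2) ''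
                            (↑G : Set (ℝ × ℝ))) : ℝ) := by
  refine ⟨1, one_pos, fun a₁ a₂ a₃ hdisc => ?_⟩
  obtain ⟨ε, hε, hεs⟩ := DiscretizedSumProduct.exists_rpow_mul_card_lt_coverNum hs0 hs1 hdisc
  refine ⟨ε, 1, hε, one_pos, fun C hC => ?_⟩
  obtain ⟨δ₀, hδ₀, hlarge⟩ := hεs C (zero_le_one.trans hC)
  refine ⟨δ₀, hδ₀, fun δ hδ hδδ₀ A hA hsep hcard hconc G hG hrow hcol => ?_⟩
  have hδε : 0 ≤ δ ^ (-ε) := rpow_nonneg hδ.le _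
  have hcoeff : 1 * C ^ (-1 : ℝ) * δ ^ (-ε) * (A.card : ℝ) ≤ δ ^ (-ε) * A.card := by
    calc 1 * C ^ (-1 : ℝ) * δ ^ (-ε) * (A.card : ℝ) ≤ 1 * 1 * δ ^ (-ε) * A.card := by
          gcongr
          exact rpow_le_one_of_one_le_of_nonpos hC (by norm_num)
      _ = δ ^ (-ε) * A.card := by ring
  rcases hlarge δ hδ hδδ₀ A ⟨hA, hsep, hcard, hconc⟩ G hG hrow hcol with hsum | hform
  · exact (hcoeff.trans hsum.le).trans (le_add_of_nonneg_right (Nat.cast_nonneg _))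
  · exact (hcoeff.trans hform.le).trans (le_add_of_nonneg_left (Nat.cast_nonneg _))
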